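/- arXiv:2408.12195 — 2 statements merged into one kernel-verified Lean document; each statement's English description precedes it below -/
import Mathlib

section
/- Let g = e^{2u}g_euc ∈ 𝓜(D∖{0}) with |𝕂_g|(D∖{0}) < π, ∫_D e^{2u} dA < ∞, and assume in addition that the curvature measure 𝕂_g is nonnegative on D∖{0}. Then λ = lim_{a.e. r→0} (1/2π) ∫_{∂D_r} ∂u/∂r satisfies λ > -1 (strictly). -/
open MeasureTheory Filter Topology Metric Set Real

noncomputable section

/-- The flat Laplacian of a function on the plane `ℂ ≃ ℝ²`. -/
noncomputable def lap (u : ℂ → ℝ) (z : ℂ) : ℝ :=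
  fderiv ℝ (fun w => fderiv ℝ u w 1) z 1 +
    fderiv ℝ (fun w => fderiv ℝ u w Complex.I) z Complex.I

/-- Integral of a function against a signed (Radon) measure. -/
noncomputable def sInt (μ : SignedMeasure ℂ) (f : ℂ → ℝ) : ℝ :=
  ∫ x, f x ∂μ.toJordanDecomposition.posPart -
    ∫ x, f x ∂μ.toJordanDecomposition.negPart

/-- A smooth test function compactly supported in `Ω`. -/
def IsTestOn (φ : ℂ → ℝ) (Ω : Set ℂ) : Prop :=
  ContDiff ℝ (⊤ : ℕ∞) φ ∧ HasCompactSupport φ ∧ tsupport φ ⊆ Ω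

/-- `g = e^{2u} g_euc ∈ 𝓜(Ω)` with Gauss curvature measure `μ`:
`u ∈ L¹_loc(Ω)`, `μ` is concentrated on `Ω`, and `-Δu = μ` distributionally on `Ω`. -/
def HasCurv (u : ℂ → ℝ) (Ω : Set ℂ) (μ : SignedMeasure ℂ) : Prop :=
  LocallyIntegrableOn u Ω volume ∧ μ.totalVariation Ωᶜ = 0 ∧
    ∀ φ : ℂ → ℝ, IsTestOn φ Ω → (-∫ x in Ω, u x * lap φ x) = sInt μ φ

/-- The radial flux `∫_{∂D_r} ∂u/∂r` through the circle of radius `r` about `0`. -/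
noncomputable def flux (u : ℂ → ℝ) (r : ℝ) : ℝ :=
  ∫ θ in (0 : ℝ)..(2 * π),
    (fderiv ℝ u ((r : ℂ) * Complex.exp (θ * Complex.I)) (Complex.exp (θ * Complex.I))) * r

/-- The logarithmic potential `I_μ(x) = -(1/2π) ∫ log|x-y| dμ(y)` of a signed measure. -/
noncomputable def Ipot (μ : SignedMeasure ℂ) (x : ℂ) : ℝ :=
  -(1 / (2 * π)) * sInt μ (fun y => Real.log ‖x - y‖)

/-!
Subtracting from `u` the logarithmic potential of the curvature measure leaves a weakly harmonic
function on the punctured disk, which by Weyl's lemma agrees almost everywhere with a harmonic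
function `W`. Nonnegativity of the curvature bounds the potential below, so `e^{2W}` is integrable;
the mean of `W` over `‖z‖ = r` is `A log r + B`, and Jensen's inequality turns integrability into
`-1 < A`. It also makes the singularity of `z (W_x - i W_y)` at the puncture removable, so
`r ∂W/∂r → A`.

The curvature measure does not charge the puncture, so on average over `‖z‖ < r` the potential
decreases `r ∂u/∂r` by `o(1)` at most. Hence `λ ≥ min A 0 > -1`.
-/

/-! ### Radial test functions -/

/-- A smooth profile `h`, vanishing on `[b², ∞)`. The associated radial functions are written in
terms of the *squared* distance, which keeps them smooth at their centre. -/
structure IsRadialProfile (h : ℝ → ℝ) (b : ℝ) : Prop where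
  pos : 0 < b
  contDiff : ContDiff ℝ (⊤ : ℕ∞) h
  eq_zero : ∀ q, b ^ 2 ≤ q → h q = 0

/-- The radial function about `p` with profile `h` in the squared distance. -/
def radial (h : ℝ → ℝ) (p : ℂ) : ℂ → ℝ := fun x => h (‖x - p‖ ^ 2)

/-- The profile of the Laplacian of the radial functions with profile `h`, see `lap_radial`. -/
def radialLap (h : ℝ → ℝ) (q : ℝ) : ℝ := 4 * (deriv h q + q * deriv (deriv h) q)

lemma hasFDerivAt_radial {h : ℝ → ℝ} (hh : Differentiable ℝ h) (p x : ℂ) :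
    HasFDerivAt (radial h p) ((2 * deriv h (‖x - p‖ ^ 2)) • innerSL ℝ (x - p)) x := by
  have hq : HasFDerivAt (fun w : ℂ => ‖w - p‖ ^ 2) (2 • innerSL ℝ (x - p)) x := by
    simpa using ((hasFDerivAt_id (𝕜 := ℝ) x).sub_const p).norm_sq
  refine ((hh _).hasDerivAt.comp_hasFDerivAt x hq).congr_fderiv ?_
  ext e
  simp only [smul_apply, smul_eq_mul, nsmul_eq_mul]
  ring

lemma fderiv_radial {h : ℝ → ℝ} (hh : Differentiable ℝ h) (p x e : ℂ) :
    fderiv ℝ (radial h p) x e = 2 * deriv h (‖x - p‖ ^ 2) * inner ℝ (x - p) e := by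
  rw [(hasFDerivAt_radial hh p x).fderiv, smul_apply, innerSL_apply_apply, smul_eq_mul]

lemma fderiv_fderiv_radial {h : ℝ → ℝ} (hh : Differentiable ℝ h)
    (hh' : Differentiable ℝ (deriv h)) (p x e : ℂ) :
    fderiv ℝ (fun w => fderiv ℝ (radial h p) w e) x e =
      4 * deriv (deriv h) (‖x - p‖ ^ 2) * inner ℝ (x - p) e ^ 2 +
        2 * deriv h (‖x - p‖ ^ 2) * ‖e‖ ^ 2 := by
  have hinner : HasFDerivAt (fun w : ℂ => inner ℝ (w - p) e) (innerSL ℝ e) x := by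
    have := (innerSL ℝ e).hasFDerivAt.comp x ((hasFDerivAt_id (𝕜 := ℝ) x).sub_const p)
    refine this.congr_of_eventuallyEq (.of_forall fun w => ?_)
    exact real_inner_comm e (w - p)
  have hprod := ((hasFDerivAt_radial hh' p x).const_mul 2).mul hinner
  have heq : (fun w => fderiv ℝ (radial h p) w e) =
      (fun w => 2 * radial (deriv h) p w) * fun w => inner ℝ (w - p) e :=
    funext fun w => fderiv_radial hh p w e
  rw [heq, hprod.fderiv]
  simp only [add_apply, smul_apply, innerSL_apply_apply,
    smul_eq_mul, real_inner_self_eq_norm_sq, radial]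
  ring

lemma lap_radial {h : ℝ → ℝ} (hh : Differentiable ℝ h) (hh' : Differentiable ℝ (deriv h))
    (p x : ℂ) : lap (radial h p) x = radialLap h (‖x - p‖ ^ 2) := by
  have hsq : ‖x - p‖ ^ 2 = (x - p).re ^ 2 + (x - p).im ^ 2 := by
    rw [← Complex.normSq_eq_norm_sq, Complex.normSq_apply]; ring
  have hre : inner ℝ (x - p) 1 = (x - p).re := by simp [Complex.inner]
  have him : inner ℝ (x - p) Complex.I = (x - p).im := by
    simp [Complex.inner, add_comm, sub_eq_add_neg]
  rw [lap, fderiv_fderiv_radial hh hh', fderiv_fderiv_radial hh hh', hre, him, radialLap,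
    norm_one, Complex.norm_I]
  linear_combination -4 * deriv (deriv h) (‖x - p‖ ^ 2) * hsq

lemma contDiff_radial {h : ℝ → ℝ} (hh : ContDiff ℝ (⊤ : ℕ∞) h) (p : ℂ) :
    ContDiff ℝ (⊤ : ℕ∞) (radial h p) :=
  hh.comp ((contDiff_id.sub contDiff_const).norm_sq ℝ)

lemma radial_eq_radial_zero_sub (h : ℝ → ℝ) (p x : ℂ) : radial h p x = radial h 0 (p - x) := by
  simp only [radial, sub_zero, norm_sub_rev]

lemma sq_lt_norm_sub_sq {b : ℝ} (hb : 0 ≤ b) {p x : ℂ} (hx : x ∉ closedBall p b) :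
    b ^ 2 < ‖x - p‖ ^ 2 := by
  rw [mem_closedBall, dist_eq_norm, not_le] at hx
  gcongr

namespace IsRadialProfile

variable {h : ℝ → ℝ} {b : ℝ} (H : IsRadialProfile h b)

include H

lemma contDiff_deriv : ContDiff ℝ (⊤ : ℕ∞) (deriv h) :=
  (contDiff_infty_iff_deriv.1 H.contDiff).2

lemma differentiable : Differentiable ℝ h :=
  H.contDiff.differentiable (by simp)

lemma differentiable_deriv : Differentiable ℝ (deriv h) :=
  H.contDiff_deriv.differentiable (by simp)

lemma lap_radial (p x : ℂ) : lap (radial h p) x = radialLap h (‖x - p‖ ^ 2) :=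
  _root_.lap_radial H.differentiable H.differentiable_deriv p x

lemma continuous_radialLap : Continuous (radialLap h) := by
  have := H.contDiff_deriv.continuous
  have := (contDiff_infty_iff_deriv.1 H.contDiff_deriv).2.continuous
  unfold radialLap
  fun_prop

lemma radialLap_eq_zero {q : ℝ} (hq : b ^ 2 < q) : radialLap h q = 0 := by
  have hzero : h =ᶠ[𝓝 q] fun _ => 0 := by
    filter_upwards [eventually_gt_nhds hq] with t ht using H.eq_zero t ht.le
  simp only [radialLap, hzero.deriv.eq_of_nhds, hzero.deriv.deriv.eq_of_nhds, deriv_const,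
    deriv_const', mul_zero, add_zero]

lemma deriv_eq_zero {q : ℝ} (hq : b ^ 2 ≤ q) : deriv h q = 0 := by
  have hconst : HasDerivWithinAt h 0 (Ici q) q :=
    (hasDerivWithinAt_const q (Ici q) (0 : ℝ)).congr
      (fun t ht => H.eq_zero t (hq.trans ht)) (H.eq_zero q hq)
  exact (uniqueDiffOn_Ici q q self_mem_Ici).eq_deriv _
    (H.differentiable q).hasDerivAt.hasDerivWithinAt hconst

lemma continuous_lap_radial (p : ℂ) : Continuous (lap (radial h p)) := by
  have := H.continuous_radialLap
  rw [funext (H.lap_radial p)]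
  fun_prop

lemma radial_eq_zero {p x : ℂ} (hx : x ∉ closedBall p b) : radial h p x = 0 :=
  H.eq_zero _ (sq_lt_norm_sub_sq H.pos.le hx).le

lemma lap_radial_eq_zero {p x : ℂ} (hx : x ∉ closedBall p b) : lap (radial h p) x = 0 := by
  rw [H.lap_radial, H.radialLap_eq_zero (sq_lt_norm_sub_sq H.pos.le hx)]

lemma hasCompactSupport_radial (p : ℂ) : HasCompactSupport (radial h p) :=
  .intro (isCompact_closedBall p b) fun _ => H.radial_eq_zero

lemma isTestOn_radial {p : ℂ} {Ω : Set ℂ} (hΩ : closedBall p b ⊆ Ω) :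
    IsTestOn (radial h p) Ω :=
  ⟨contDiff_radial H.contDiff p, H.hasCompactSupport_radial p,
    (closure_minimal (Function.support_subset_iff'.2 fun _ => H.radial_eq_zero)
      isClosed_closedBall).trans hΩ⟩

end IsRadialProfile

/-! ### Polar coordinates -/

lemma polarCoord_symm_eq_circleMap (p : ℝ × ℝ) :
    Complex.polarCoord.symm p = circleMap 0 p.1 p.2 := by
  rw [Complex.polarCoord_symm_apply, circleMap_zero, Complex.exp_mul_I, Complex.ofReal_cos,
    Complex.ofReal_sin]

lemma continuous_uncurry_circleMap_zero : Continuous fun p : ℝ × ℝ => circleMap 0 p.1 p.2 := by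
  simp only [circleMap_zero]
  fun_prop

lemma measurePreserving_circleMap_zero {S : Set ℝ} (hS : MeasurableSet S) (hpos : S ⊆ Ioi 0) :
    MeasurePreserving (fun p : ℝ × ℝ => circleMap 0 p.1 p.2)
      (((volume.restrict S).withDensity ENNReal.ofReal).prod (volume.restrict (Ioo (-π) π)))
      (volume.restrict (norm ⁻¹' S)) := by
  have hmeas := continuous_uncurry_circleMap_zero.measurable
  refine ⟨hmeas, Measure.ext fun A hA => ?_⟩
  have hind : Measurable ((A ∩ norm ⁻¹' S).indicator (1 : ℂ → ENNReal)) :=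
    measurable_one.indicator (hA.inter (measurable_norm hS))
  rw [Measure.map_apply hmeas hA, Measure.restrict_apply hA,
    ← lintegral_indicator_one (hA.inter (measurable_norm hS)),
    ← Complex.lintegral_comp_polarCoord_symm, ← lintegral_indicator_one (hmeas hA),
    lintegral_prod _ (measurable_one.indicator (hmeas hA)).aemeasurable,
    lintegral_withDensity_eq_lintegral_mul _ (by fun_prop)
      (measurable_one.indicator (hmeas hA)).lintegral_prod_right']
  simp_rw [polarCoord_symm_eq_circleMap, smul_eq_mul]
  change _ = ∫⁻ p in Ioi (0 : ℝ) ×ˢ Ioo (-π) π, _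
  rw [Measure.volume_eq_prod, ← Measure.prod_restrict, lintegral_prod _ (by
    exact (measurable_fst.ennreal_ofReal.mul (hind.comp hmeas)).aemeasurable)]
  have hrestrict : (volume : Measure ℝ).restrict S = (volume.restrict (Ioi 0)).restrict S := by
    rw [Measure.restrict_restrict hS, inter_eq_left.2 hpos]
  rw [hrestrict, ← lintegral_indicator hS]
  refine setLIntegral_congr_fun measurableSet_Ioi fun s (hs : 0 < s) => ?_
  have hnorm : ∀ θ, ‖circleMap 0 s θ‖ = s := fun θ => by rw [norm_circleMap_zero, abs_of_pos hs]
  have hcircle := hind.comp (continuous_circleMap 0 s).measurable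
  simp only [Function.comp_def] at hcircle
  by_cases hsS : s ∈ S
  · rw [indicator_of_mem hsS]
    dsimp only
    rw [lintegral_const_mul _ hcircle]
    refine congrArg (ENNReal.ofReal s * ·) (lintegral_congr fun θ => ?_)
    by_cases hθ : circleMap 0 s θ ∈ A <;> simp [hθ, hnorm, hsS]
  · simp [hnorm, hsS]

lemma setLIntegral_norm_preimage {f : ℂ → ENNReal} (hf : Measurable f) {S : Set ℝ}
    (hS : MeasurableSet S) (hpos : S ⊆ Ioi 0) :
    ∫⁻ z in norm ⁻¹' S, f z =
      ∫⁻ s in S, ENNReal.ofReal s * ∫⁻ θ in Ioo (-π) π, f (circleMap 0 s θ) := by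
  have hcomp := hf.comp continuous_uncurry_circleMap_zero.measurable
  rw [← (measurePreserving_circleMap_zero hS hpos).lintegral_comp hf]
  simp only [Function.comp_def] at hcomp
  rw [lintegral_prod _ hcomp.aemeasurable,
    lintegral_withDensity_eq_lintegral_mul _ (by fun_prop) hcomp.lintegral_prod_right']
  rfl

lemma circleAverage_eq_integral_Ioo (f : ℂ → ℝ) (c : ℂ) (R : ℝ) :
    circleAverage f c R = (2 * π)⁻¹ * ∫ θ in Ioo (-π) π, f (circleMap c R θ) := by
  rw [circleAverage_eq_integral_add (-π), ← integral_Ioc_eq_integral_Ioo,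
    ← intervalIntegral.integral_of_le (by linarith [pi_pos]),
    intervalIntegral.integral_comp_add_right fun θ => f (circleMap c R θ), smul_eq_mul]
  ring_nf

section polar

variable {f : ℂ → ℝ} {S : Set ℝ} (hS : MeasurableSet S) (hpos : S ⊆ Ioi 0)
  (hf : IntegrableOn f (norm ⁻¹' S))

include hS hpos hf

lemma integrable_comp_circleMap_zero :
    Integrable (fun p : ℝ × ℝ => f (circleMap 0 p.1 p.2))
      (((volume.restrict S).withDensity ENNReal.ofReal).prod (volume.restrict (Ioo (-π) π))) :=
  (measurePreserving_circleMap_zero hS hpos).integrable_comp_of_integrable hf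

lemma integrableOn_mul_circleAverage : IntegrableOn (fun s => s * circleAverage f 0 s) S := by
  have hint := (integrable_comp_circleMap_zero hS hpos hf).integral_prod_left.const_mul (2 * π)⁻¹
  rw [integrable_withDensity_iff_integrable_smul' (by fun_prop)
    (.of_forall fun _ => ENNReal.ofReal_lt_top)] at hint
  refine hint.congr ((ae_restrict_iff' hS).2 <| .of_forall fun s hs => ?_)
  simp only [circleAverage_eq_integral_Ioo, ENNReal.toReal_ofReal (hpos hs).le, smul_eq_mul]

lemma setIntegral_norm_preimage :
    ∫ z in norm ⁻¹' S, f z = 2 * π * ∫ s in S, s * circleAverage f 0 s := by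
  have hpolar := measurePreserving_circleMap_zero hS hpos
  have hmap := integral_map hpolar.aemeasurable (hpolar.map_eq ▸ hf.aestronglyMeasurable)
  rw [hpolar.map_eq, integral_prod _ (integrable_comp_circleMap_zero hS hpos hf),
    integral_withDensity_eq_integral_toReal_smul (by fun_prop)
      (.of_forall fun _ => ENNReal.ofReal_lt_top)] at hmap
  rw [hmap, ← integral_const_mul]
  refine setIntegral_congr_fun hS fun s hs => ?_
  simp only [circleAverage_eq_integral_Ioo, ENNReal.toReal_ofReal (hpos hs).le, smul_eq_mul]
  field_simp

end polar

lemma norm_preimage_Ioo_zero (R : ℝ) : norm ⁻¹' Ioo 0 R = ball (0 : ℂ) R \ {0} := by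
  ext z
  simp [and_comm]

/-! ### Logarithmic potentials -/

lemma volume_ball_eq_ofReal (y : ℂ) {R : ℝ} (hR : 0 ≤ R) :
    volume (ball y R) = ENNReal.ofReal (π * R ^ 2) := by
  rw [Complex.volume_ball, ← ENNReal.ofReal_pow hR, mul_comm, ENNReal.ofReal_mul pi_pos.le]
  congr 1
  exact (ENNReal.ofReal_coe_nnreal (p := NNReal.pi)).symm

lemma setLIntegral_inv_norm_sub_ball_self (y : ℂ) (R : ℝ) :
    ∫⁻ x in ball y R, ENNReal.ofReal ‖x - y‖⁻¹ = ENNReal.ofReal (2 * π * R) := by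
  have htranslate := (measurePreserving_add_right volume y).setLIntegral_comp_preimage
    measurableSet_ball (f := fun x => ENNReal.ofReal ‖x - y‖⁻¹) (by fun_prop) (s := ball y R)
  have hball : (· + y) ⁻¹' ball y R = ball (0 : ℂ) R := by ext; simp [dist_eq_norm]
  have hpolar := setLIntegral_norm_preimage (f := fun x : ℂ => ENNReal.ofReal ‖x‖⁻¹)
    (by fun_prop) (measurableSet_Ioo (a := 0) (b := R)) fun _ hs => hs.1
  have hcircle : ∀ s ∈ Ioo 0 R, ENNReal.ofReal s * ∫⁻ θ in Ioo (-π) π,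
      ENNReal.ofReal ‖circleMap 0 s θ‖⁻¹ = ENNReal.ofReal (2 * π) := fun s hs => by
    have hs0 : 0 < s := hs.1
    simp only [norm_circleMap_zero, abs_of_pos hs0, setLIntegral_const, Real.volume_Ioo]
    rw [← mul_assoc, ← ENNReal.ofReal_mul hs0.le, mul_inv_cancel₀ hs0.ne', ENNReal.ofReal_one,
      one_mul]
    ring_nf
  simp_rw [hball, add_sub_cancel_right] at htranslate
  rw [← htranslate, ← setLIntegral_congr (sdiff_null_ae_eq_self (measure_singleton 0)),
    ← norm_preimage_Ioo_zero, hpolar, setLIntegral_congr_fun measurableSet_Ioo hcircle,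
    setLIntegral_const, Real.volume_Ioo, sub_zero, ← ENNReal.ofReal_mul (by positivity)]

lemma setLIntegral_inv_norm_sub_ball_le (p y : ℂ) {R : ℝ} (hR : 0 < R) :
    ∫⁻ x in ball p R, ENNReal.ofReal ‖x - y‖⁻¹ ≤ ENNReal.ofReal (3 * π * R) :=
  calc
    _ ≤ ∫⁻ x in ball y R ∪ ball p R \ ball y R, ENNReal.ofReal ‖x - y‖⁻¹ :=
      lintegral_mono_set (by rw [union_sdiff_self]; exact subset_union_right)
    _ ≤ (∫⁻ x in ball y R, ENNReal.ofReal ‖x - y‖⁻¹) +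
          ∫⁻ x in ball p R \ ball y R, ENNReal.ofReal ‖x - y‖⁻¹ := lintegral_union_le _ _ _
    _ ≤ ENNReal.ofReal (2 * π * R) + ∫⁻ _ in ball p R \ ball y R, ENNReal.ofReal R⁻¹ := by
      refine add_le_add (setLIntegral_inv_norm_sub_ball_self y R).le
        (setLIntegral_mono measurable_const fun x hx => ENNReal.ofReal_le_ofReal ?_)
      have hle : R ≤ ‖x - y‖ := by simpa [dist_eq_norm] using hx.2
      gcongr
    _ ≤ ENNReal.ofReal (2 * π * R) + ENNReal.ofReal R⁻¹ * ENNReal.ofReal (π * R ^ 2) := by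
      rw [setLIntegral_const, ← volume_ball_eq_ofReal p hR.le]
      gcongr
      exact sdiff_subset
    _ = ENNReal.ofReal (3 * π * R) := by
      rw [← ENNReal.ofReal_mul (by positivity),
        ← ENNReal.ofReal_add (by positivity) (by positivity)]
      congr 1
      field_simp
      ring

lemma abs_log_le_add_inv {t : ℝ} (ht : 0 ≤ t) : |Real.log t| ≤ t + t⁻¹ := by
  rcases ht.eq_or_lt with rfl | ht
  · simp
  have hlog := Real.log_le_sub_one_of_pos ht
  have hlog_inv := Real.log_le_sub_one_of_pos (inv_pos.2 ht)
  rw [Real.log_inv] at hlog_inv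
  rw [abs_le]
  constructor <;> linarith [inv_pos.2 ht]

lemma setLIntegral_enorm_log_norm_sub_le (p y : ℂ) {R : ℝ} (hR : 0 < R) :
    ∫⁻ x in ball p R, ‖Real.log ‖x - y‖‖ₑ ≤
      ENNReal.ofReal (3 * π * R + (R + ‖p - y‖) * (π * R ^ 2)) :=
  calc
    _ ≤ ∫⁻ x in ball p R, (ENNReal.ofReal ‖x - y‖⁻¹ + ENNReal.ofReal (R + ‖p - y‖)) := by
      refine setLIntegral_mono (by fun_prop) fun x hx => ?_
      rw [← ENNReal.ofReal_add (by positivity) (by positivity), ← ofReal_norm,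
        Real.norm_eq_abs]
      refine ENNReal.ofReal_le_ofReal ((abs_log_le_add_inv (norm_nonneg _)).trans ?_)
      rw [mem_ball, dist_eq_norm] at hx
      linarith [norm_sub_le_norm_sub_add_norm_sub x p y]
    _ ≤ ENNReal.ofReal (3 * π * R) + ENNReal.ofReal (R + ‖p - y‖) * ENNReal.ofReal (π * R ^ 2) := by
      rw [lintegral_add_right _ measurable_const, setLIntegral_const,
        volume_ball_eq_ofReal _ hR.le]
      gcongr
      exact setLIntegral_inv_norm_sub_ball_le p y hR
    _ = _ := by
      rw [← ENNReal.ofReal_mul (by positivity),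
        ← ENNReal.ofReal_add (by positivity) (by positivity)]

lemma integrableOn_log_norm_sub_ball (p y : ℂ) {R : ℝ} (hR : 0 < R) :
    IntegrableOn (fun x => Real.log ‖x - y‖) (ball p R) :=
  ⟨(by fun_prop : Measurable _).aestronglyMeasurable,
    (setLIntegral_enorm_log_norm_sub_le p y hR).trans_lt ENNReal.ofReal_lt_top⟩

lemma circleAverage_log_norm_sub (p y : ℂ) {s : ℝ} (hs : 0 < s) :
    circleAverage (fun x => Real.log ‖x - y‖) p s = Real.log (max s ‖y - p‖) := by
  rw [circleAverage_log_norm_sub_const_eq_log_radius_add_posLog hs.ne',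
    posLog_eq_log_max_one (by positivity), norm_sub_rev, ← Real.log_mul hs.ne' (by positivity),
    mul_max_of_nonneg _ _ hs.le, mul_one, mul_inv_cancel_left₀ hs.ne']

namespace IsRadialProfile

variable {h : ℝ → ℝ} {b : ℝ} (H : IsRadialProfile h b)

include H

lemma hasDerivAt_two_mul_sq_mul_deriv (s : ℝ) :
    HasDerivAt (fun s => 2 * s ^ 2 * deriv h (s ^ 2)) (s * radialLap h (s ^ 2)) s := by
  have hsq : HasDerivAt (fun s : ℝ => s ^ 2) (2 * s) s := by simpa using hasDerivAt_pow 2 s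
  refine ((hsq.const_mul 2).mul
    ((H.differentiable_deriv _).hasDerivAt.comp s hsq)).congr_deriv ?_
  simp only [Function.comp_apply, radialLap]
  ring

lemma continuousOn_log_max_primitive {R : ℝ} (hR : 0 ≤ R) :
    ContinuousOn (fun s => Real.log (max s R) * (2 * s ^ 2 * deriv h (s ^ 2)) -
      h (max s R ^ 2)) (Icc 0 b) := by
  have := H.contDiff_deriv.continuous
  have := H.contDiff.continuous
  rcases hR.eq_or_lt with rfl | hR
  · have := Real.continuous_mul_log
    refine (by fun_prop : Continuous fun s : ℝ =>
      (s * Real.log s) * (2 * s * deriv h (s ^ 2)) - h (s ^ 2)).continuousOn.congr fun s hs => ?_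
    rw [max_eq_left hs.1]
    ring
  · have : Continuous fun s : ℝ => Real.log (max s R) :=
      Continuous.log (by fun_prop) fun s => by positivity
    fun_prop

lemma hasDerivAt_log_max_primitive {R s : ℝ} (hs : 0 < s) (hsR : s ≠ R) :
    HasDerivAt (fun s => Real.log (max s R) * (2 * s ^ 2 * deriv h (s ^ 2)) - h (max s R ^ 2))
      (Real.log (max s R) * (s * radialLap h (s ^ 2))) s := by
  have hP := H.hasDerivAt_two_mul_sq_mul_deriv s
  rcases lt_or_gt_of_ne hsR with hlt | hgt
  · rw [max_eq_right hlt.le]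
    refine ((hP.const_mul (Real.log R)).sub_const (h (R ^ 2))).congr_of_eventuallyEq ?_
    filter_upwards [eventually_lt_nhds hlt] with t ht
    rw [max_eq_right ht.le]
  · rw [max_eq_left hgt.le]
    have hsq : HasDerivAt (fun s : ℝ => s ^ 2) (2 * s) s := by simpa using hasDerivAt_pow 2 s
    have hT := ((Real.hasDerivAt_log hs.ne').mul hP).sub
      ((H.differentiable (s ^ 2)).hasDerivAt.comp s hsq)
    refine (hT.congr_deriv ?_).congr_of_eventuallyEq ?_
    · field_simp
      ring
    · filter_upwards [eventually_gt_nhds hgt] with t ht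
      simp only [max_eq_left ht.le, Pi.sub_apply, Pi.mul_apply, Function.comp_apply]

lemma integral_log_max_mul_radialLap {R : ℝ} (hR : 0 ≤ R) :
    ∫ s in (0 : ℝ)..b, Real.log (max s R) * (s * radialLap h (s ^ 2)) = h (R ^ 2) := by
  have hcont : Continuous fun s => s * radialLap h (s ^ 2) := by
    have := H.continuous_radialLap
    fun_prop
  have hlog : IntervalIntegrable (fun s => Real.log (max s R)) volume 0 b := by
    rcases hR.eq_or_lt with rfl | hR
    · refine intervalIntegral.intervalIntegrable_log'.congr fun s hs => ?_
      rw [uIoc_of_le H.pos.le] at hs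
      rw [max_eq_left hs.1.le]
    · exact (Continuous.log (by fun_prop) fun s => by positivity).intervalIntegrable _ _
  rw [MeasureTheory.integral_eq_of_hasDerivAt_off_countable_of_le _ _ H.pos.le
    (countable_singleton R) (H.continuousOn_log_max_primitive hR)
    (fun s hs => H.hasDerivAt_log_max_primitive hs.1.1 hs.2)
    (hlog.mul_continuousOn hcont.continuousOn),
    max_eq_right hR, H.deriv_eq_zero le_rfl, H.eq_zero (max b R ^ 2)
      (by have := H.pos; gcongr; exact le_max_left _ _)]
  ring

lemma integrable_log_norm_sub_mul_lap_radial (p y : ℂ) :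
    Integrable fun x => Real.log ‖x - y‖ * lap (radial h p) x := by
  obtain ⟨C, hC⟩ := (isCompact_closedBall p b).exists_bound_of_continuousOn
    (H.continuous_lap_radial p).continuousOn
  have hlog : IntegrableOn (fun x => Real.log ‖x - y‖) (closedBall p b) :=
    (integrableOn_log_norm_sub_ball p y (add_pos H.pos one_pos)).mono_set
      (closedBall_subset_ball (lt_add_one b))
  refine (integrableOn_iff_integrable_of_support_subset (s := closedBall p b) ?_).1 <|
    hlog.mul_bdd (c := C) (H.continuous_lap_radial p).aestronglyMeasurable <|
      (ae_restrict_iff' measurableSet_closedBall).2 <| .of_forall hC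
  exact Function.support_subset_iff'.2 fun x hx => by rw [H.lap_radial_eq_zero hx, mul_zero]

lemma circleAverage_log_norm_sub_mul_lap_radial (y : ℂ) {s : ℝ} (hs : 0 < s) :
    circleAverage (fun x => Real.log ‖x - y‖ * lap (radial h 0) x) 0 s =
      Real.log (max s ‖y‖) * radialLap h (s ^ 2) := by
  have hsphere : EqOn (fun x => Real.log ‖x - y‖ * lap (radial h 0) x)
      (fun x => radialLap h (s ^ 2) • Real.log ‖x - y‖) (sphere 0 |s|) := fun x hx => by
    rw [mem_sphere_zero_iff_norm, abs_of_pos hs] at hx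
    simp only [H.lap_radial, sub_zero, hx, smul_eq_mul, mul_comm]
  rw [circleAverage_congr_sphere hsphere, circleAverage_fun_smul, circleAverage_log_norm_sub 0 y hs,
    sub_zero, smul_eq_mul, mul_comm]

lemma integral_log_norm_sub_mul_lap_radial_zero (y : ℂ) :
    ∫ x, Real.log ‖x - y‖ * lap (radial h 0) x = 2 * π * h (‖y‖ ^ 2) := by
  have hvanish : ∀ x ∈ norm ⁻¹' Ioi 0 \ norm ⁻¹' Ioc (0 : ℝ) b,
      Real.log ‖x - y‖ * lap (radial h 0) x = 0 := fun x hx => by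
    rw [H.lap_radial_eq_zero fun hxb => hx.2 ⟨hx.1, mem_closedBall_zero_iff.1 hxb⟩, mul_zero]
  have hpunctured : norm ⁻¹' Ioi (0 : ℝ) = ({0}ᶜ : Set ℂ) := by ext; simp
  calc
    _ = ∫ x in norm ⁻¹' Ioi (0 : ℝ), Real.log ‖x - y‖ * lap (radial h 0) x := by
      rw [hpunctured, restrict_compl_singleton]
    _ = ∫ x in norm ⁻¹' Ioc (0 : ℝ) b, Real.log ‖x - y‖ * lap (radial h 0) x :=
      setIntegral_eq_of_subset_of_forall_sdiff_eq_zero (measurable_norm measurableSet_Ioi)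
        (preimage_mono Ioc_subset_Ioi_self) hvanish
    _ = 2 * π * ∫ s in (0 : ℝ)..b, Real.log (max s ‖y‖) * (s * radialLap h (s ^ 2)) := by
      rw [setIntegral_norm_preimage measurableSet_Ioc Ioc_subset_Ioi_self
        (H.integrable_log_norm_sub_mul_lap_radial 0 y).integrableOn,
        intervalIntegral.integral_of_le H.pos.le]
      congr 1
      refine setIntegral_congr_fun measurableSet_Ioc fun s hs => ?_
      simp only [H.circleAverage_log_norm_sub_mul_lap_radial y hs.1]
      ring
    _ = 2 * π * h (‖y‖ ^ 2) := by rw [H.integral_log_max_mul_radialLap (norm_nonneg y)]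

lemma integral_log_norm_sub_mul_lap_radial (p y : ℂ) :
    ∫ x, Real.log ‖x - y‖ * lap (radial h p) x = 2 * π * radial h p y := by
  rw [radial, ← H.integral_log_norm_sub_mul_lap_radial_zero (y - p),
    ← integral_add_right_eq_self _ p]
  refine integral_congr_ae (.of_forall fun x => ?_)
  simp only [H.lap_radial, add_sub_cancel_right, sub_zero, sub_sub_eq_add_sub]

end IsRadialProfile

/-- The logarithmic potential of a positive measure, the solution of `-Δ (logPot ν) = ν`. -/
def logPot (ν : Measure ℂ) (x : ℂ) : ℝ := -(1 / (2 * π)) * ∫ y, Real.log ‖x - y‖ ∂ν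

lemma measurable_logPot (ν : Measure ℂ) [SFinite ν] : Measurable (logPot ν) :=
  (StronglyMeasurable.integral_prod_right' (f := fun q : ℂ × ℂ => Real.log ‖q.1 - q.2‖)
    (by fun_prop : Measurable _).stronglyMeasurable).measurable.const_mul _

section logPot

variable {ν : Measure ℂ} [IsFiniteMeasure ν] {M : ℝ} (hν : ∀ᵐ y ∂ν, ‖y‖ ≤ M)

include hν

lemma integrable_log_norm_sub_prod {R : ℝ} (hR : 0 < R) :
    Integrable (fun q : ℂ × ℂ => Real.log ‖q.1 - q.2‖)
      ((volume.restrict (ball (0 : ℂ) R)).prod ν) := by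
  have hmeas : Measurable fun q : ℂ × ℂ => Real.log ‖q.1 - q.2‖ := by fun_prop
  refine ⟨hmeas.aestronglyMeasurable, ?_⟩
  rw [hasFiniteIntegral_iff_enorm, lintegral_prod_symm _ hmeas.enorm.aemeasurable]
  calc
    _ ≤ ∫⁻ _, ENNReal.ofReal (3 * π * R + (R + M) * (π * R ^ 2)) ∂ν := by
      refine lintegral_mono_ae (hν.mono fun y hy => ?_)
      refine (setLIntegral_enorm_log_norm_sub_le 0 y hR).trans (ENNReal.ofReal_le_ofReal ?_)
      rw [zero_sub, norm_neg]
      gcongr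
    _ < ⊤ := by
      rw [lintegral_const]
      exact ENNReal.mul_lt_top ENNReal.ofReal_lt_top (measure_lt_top _ _)

lemma ae_integrable_log_norm_sub : ∀ᵐ x : ℂ, Integrable (fun y => Real.log ‖x - y‖) ν := by
  have hball : ∀ n : ℕ, ∀ᵐ x : ℂ, x ∈ ball (0 : ℂ) (n + 1) →
      Integrable (fun y => Real.log ‖x - y‖) ν := fun n => by
    rw [← ae_restrict_iff' measurableSet_ball]
    exact (integrable_log_norm_sub_prod hν n.cast_add_one_pos).prod_right_ae
  filter_upwards [ae_all_iff.2 hball] with x hx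
  obtain ⟨n, hn⟩ := exists_nat_gt ‖x‖
  exact hx n (mem_ball_zero_iff.2 (hn.trans (lt_add_one _)))

lemma integrableOn_logPot_ball {R : ℝ} (hR : 0 < R) : IntegrableOn (logPot ν) (ball 0 R) :=
  (integrable_log_norm_sub_prod hν hR).integral_prod_left.const_mul _

lemma locallyIntegrable_logPot : LocallyIntegrable (logPot ν) := fun x =>
  ⟨ball 0 (‖x‖ + 1), isOpen_ball.mem_nhds (mem_ball_zero_iff.2 (lt_add_one _)),
    integrableOn_logPot_ball hν (by positivity)⟩

lemma neg_mul_posLog_le_logPot {R : ℝ} {x : ℂ} (hx : ‖x‖ ≤ R) :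
    -(1 / (2 * π)) * (ν.real univ * log⁺ (R + M)) ≤ logPot ν x := by
  refine mul_le_mul_of_nonpos_left ?_ (by simp only [one_div, neg_nonpos]; positivity)
  by_cases hint : Integrable (fun y => Real.log ‖x - y‖) ν
  · rw [← smul_eq_mul, ← integral_const]
    refine integral_mono_ae hint (integrable_const _) (hν.mono fun y hy => ?_)
    exact (le_max_right 0 _).trans <|
      posLog_le_posLog (norm_nonneg _) ((norm_sub_le x y).trans (add_le_add hx hy))
  · rw [integral_undef hint]
    exact mul_nonneg measureReal_nonneg posLog_nonneg

lemma IsRadialProfile.integral_logPot_mul_lap_radial {h : ℝ → ℝ} {b : ℝ}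
    (H : IsRadialProfile h b) (p : ℂ) :
    ∫ x, logPot ν x * lap (radial h p) x = -∫ y, radial h p y ∂ν := by
  obtain ⟨R, hR, hball⟩ := (isBounded_closedBall (x := p) (r := b)).subset_ball_lt 0 0
  have hlap : ∀ x ∉ ball 0 R, lap (radial h p) x = 0 := fun x hx =>
    H.lap_radial_eq_zero fun hxp => hx (hball hxp)
  obtain ⟨C, hC⟩ := (isCompact_closedBall (0 : ℂ) R).exists_bound_of_continuousOn
    (H.continuous_lap_radial p).continuousOn
  have hint : Integrable (fun q : ℂ × ℂ => Real.log ‖q.1 - q.2‖ * lap (radial h p) q.1)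
      ((volume.restrict (ball (0 : ℂ) R)).prod ν) := by
    have hbound : ∀ᵐ x ∂volume.restrict (ball (0 : ℂ) R), ‖lap (radial h p) x‖ ≤ C :=
      (ae_restrict_iff' measurableSet_ball).2 <| .of_forall fun x hx =>
        hC x (ball_subset_closedBall hx)
    exact (integrable_log_norm_sub_prod hν hR).mul_bdd
      ((H.continuous_lap_radial p).comp continuous_fst).aestronglyMeasurable
      (Measure.quasiMeasurePreserving_fst.ae hbound)
  calc
    _ = ∫ x in ball 0 R, -(1 / (2 * π)) * ∫ y, Real.log ‖x - y‖ * lap (radial h p) x ∂ν := by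
      rw [← setIntegral_eq_integral_of_forall_compl_eq_zero fun x hx => by rw [hlap x hx, mul_zero]]
      simp only [integral_mul_const, logPot, mul_assoc]
    _ = -(1 / (2 * π)) * ∫ y, (∫ x in ball 0 R, Real.log ‖x - y‖ * lap (radial h p) x) ∂ν := by
      rw [integral_const_mul, integral_integral_swap hint]
    _ = -(1 / (2 * π)) * ∫ y, 2 * π * radial h p y ∂ν := by
      refine congrArg _ (integral_congr_ae (.of_forall fun y => ?_))
      dsimp only
      rw [setIntegral_eq_integral_of_forall_compl_eq_zero fun x hx => by rw [hlap x hx, mul_zero],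
        H.integral_log_norm_sub_mul_lap_radial]
    _ = -∫ y, radial h p y ∂ν := by
      rw [integral_const_mul]
      field_simp

end logPot

/-! ### Radial variation of logarithmic potentials -/

lemma abs_log_sub_log_le {a b : ℝ} (ha : 0 < a) (hb : 0 < b) :
    |Real.log a - Real.log b| ≤ |a - b| * (a⁻¹ + b⁻¹) := by
  have hle : ∀ {a b : ℝ}, 0 < a → 0 < b →
      Real.log a - Real.log b ≤ |a - b| * (a⁻¹ + b⁻¹) := fun {a b} ha hb =>
    calc
      _ ≤ a / b - 1 := by
        rw [← Real.log_div ha.ne' hb.ne']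
        exact Real.log_le_sub_one_of_pos (div_pos ha hb)
      _ = (a - b) * b⁻¹ := by field_simp
      _ ≤ |a - b| * (a⁻¹ + b⁻¹) := by
        gcongr
        · exact le_abs_self _
        · exact le_add_of_nonneg_left (inv_pos.2 ha).le
  refine abs_le.2 ⟨?_, hle ha hb⟩
  have hswap := hle hb ha
  rw [abs_sub_comm, add_comm] at hswap
  linarith

/- Integrates `(R + ‖y‖) ‖z - y‖⁻¹ ≤ 2R ‖z - y‖⁻¹ + 1`. -/
lemma setLIntegral_inv_norm_sub_ball_zero_le (y : ℂ) {R : ℝ} (hR : 0 < R) :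
    ∫⁻ z in ball 0 R, ENNReal.ofReal ‖z - y‖⁻¹ ≤
      ENNReal.ofReal (7 * π * R ^ 2 / (R + ‖y‖)) := by
  have hpos : 0 < R + ‖y‖ := by positivity
  have hpt : ∀ z ∈ ball (0 : ℂ) R, ENNReal.ofReal ‖z - y‖⁻¹ ≤ ENNReal.ofReal (R + ‖y‖)⁻¹ *
      (ENNReal.ofReal (2 * R) * ENNReal.ofReal ‖z - y‖⁻¹ + 1) := fun z hz => by
    rw [← ENNReal.ofReal_one, ← ENNReal.ofReal_mul (by positivity),
      ← ENNReal.ofReal_add (by positivity) zero_le_one, ← ENNReal.ofReal_mul (by positivity)]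
    refine ENNReal.ofReal_le_ofReal ((le_inv_mul_iff₀ hpos).2 ?_)
    have hy : ‖y‖ ≤ R + ‖z - y‖ := by
      rw [mem_ball_zero_iff] at hz
      linarith [norm_le_norm_add_norm_sub' y z, norm_sub_rev y z]
    have hcancel : ‖z - y‖ * ‖z - y‖⁻¹ ≤ 1 := mul_inv_le_one
    nlinarith [inv_nonneg.2 (norm_nonneg (z - y))]
  calc
    _ ≤ ∫⁻ z in ball 0 R, ENNReal.ofReal (R + ‖y‖)⁻¹ *
          (ENNReal.ofReal (2 * R) * ENNReal.ofReal ‖z - y‖⁻¹ + 1) :=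
      setLIntegral_mono (by fun_prop) hpt
    _ ≤ ENNReal.ofReal (R + ‖y‖)⁻¹ *
          (ENNReal.ofReal (2 * R) * ENNReal.ofReal (3 * π * R) + ENNReal.ofReal (π * R ^ 2)) := by
      rw [lintegral_const_mul _ (by fun_prop), lintegral_add_right _ measurable_const,
        lintegral_const_mul _ (by fun_prop), setLIntegral_one, volume_ball_eq_ofReal 0 hR.le]
      gcongr
      exact setLIntegral_inv_norm_sub_ball_le 0 y hR
    _ = _ := by
      rw [← ENNReal.ofReal_mul (by positivity), ← ENNReal.ofReal_add (by positivity)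
        (by positivity), ← ENNReal.ofReal_mul (by positivity)]
      congr 1
      field_simp
      ring

lemma setLIntegral_inv_norm_smul_sub_ball_zero_le (y : ℂ) {a R : ℝ} (ha : 1 ≤ a) (hR : 0 < R) :
    ∫⁻ z in ball 0 R, ENNReal.ofReal ‖a • z - y‖⁻¹ ≤
      ENNReal.ofReal (7 * π * R ^ 2 / (R + ‖y‖)) := by
  have ha0 : 0 < a := one_pos.trans_le ha
  have hscale : ∀ z : ℂ, ‖a • z - y‖⁻¹ = a⁻¹ * ‖z - a⁻¹ • y‖⁻¹ := fun z => by
    rw [← mul_inv, ← norm_smul_of_nonneg ha0.le, smul_sub, smul_inv_smul₀ ha0.ne']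
  simp_rw [hscale, ENNReal.ofReal_mul (inv_nonneg.2 ha0.le)]
  rw [lintegral_const_mul _ (by fun_prop)]
  refine (mul_le_mul_right (setLIntegral_inv_norm_sub_ball_zero_le _ hR) _).trans ?_
  rw [← ENNReal.ofReal_mul (by positivity), norm_smul_of_nonneg (inv_nonneg.2 ha0.le)]
  refine ENNReal.ofReal_le_ofReal ?_
  calc
    _ = 7 * π * R ^ 2 / (a * R + ‖y‖) := by field_simp
    _ ≤ 7 * π * R ^ 2 / (R + ‖y‖) := by
      gcongr
      exact le_mul_of_one_le_left hR.le ha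

/-- The difference quotient of `v` along the dilations `z ↦ (1 + t) z`; it converges to the
radial derivative `eulerDeriv v` as `t → 0`. -/
def dilationQuotient (v : ℂ → ℝ) (t : ℝ) (z : ℂ) : ℝ := (v ((1 + t) • z) - v z) / t

/-- The radial derivative `r ∂ᵣu` of a function on the plane. -/
def eulerDeriv (u : ℂ → ℝ) (z : ℂ) : ℝ := fderiv ℝ u z z

lemma ae_dilation {P : ℂ → Prop} {t : ℝ} (ht : 0 < t) (h : ∀ᵐ z, P z) :
    ∀ᵐ z : ℂ, P ((1 + t) • z) :=
  (Measure.quasiMeasurePreserving_smul volume (by positivity)).ae h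

lemma setLIntegral_enorm_dilationQuotient_log_le (y : ℂ) {t R : ℝ} (ht : 0 < t) (hR : 0 < R) :
    ∫⁻ z in ball 0 R, ‖dilationQuotient (fun z => Real.log ‖z - y‖) t z‖ₑ ≤
      ENNReal.ofReal (14 * π * R ^ 3 / (R + ‖y‖)) := by
  have hpt : ∀ᵐ z : ℂ, z ∈ ball 0 R →
      ‖dilationQuotient (fun z => Real.log ‖z - y‖) t z‖ₑ ≤ ENNReal.ofReal R *
        (ENNReal.ofReal ‖(1 + t) • z - y‖⁻¹ + ENNReal.ofReal ‖z - y‖⁻¹) := by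
    have hne : ∀ᵐ z : ℂ, z ≠ y := by simp [ae_iff]
    filter_upwards [hne, ae_dilation ht hne] with z hz hz' hzR
    rw [← ENNReal.ofReal_add (by positivity) (by positivity), ← ENNReal.ofReal_mul hR.le,
      ← ofReal_norm, Real.norm_eq_abs, dilationQuotient, abs_div, abs_of_pos ht]
    refine ENNReal.ofReal_le_ofReal ((div_le_iff₀ ht).2 ?_)
    refine (abs_log_sub_log_le (norm_pos_iff.2 (sub_ne_zero.2 hz'))
      (norm_pos_iff.2 (sub_ne_zero.2 hz))).trans ?_
    have hdist : |‖(1 + t) • z - y‖ - ‖z - y‖| ≤ R * t := by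
      refine (abs_norm_sub_norm_le _ _).trans ?_
      rw [sub_sub_sub_cancel_right, add_smul, one_smul, add_sub_cancel_left,
        norm_smul_of_nonneg ht.le, mul_comm]
      gcongr
      exact (mem_ball_zero_iff.1 hzR).le
    rw [mul_right_comm]
    gcongr
  calc
    _ ≤ ∫⁻ z in ball 0 R, ENNReal.ofReal R *
          (ENNReal.ofReal ‖(1 + t) • z - y‖⁻¹ + ENNReal.ofReal ‖z - y‖⁻¹) :=
      setLIntegral_mono_ae' measurableSet_ball hpt
    _ ≤ ENNReal.ofReal R * (ENNReal.ofReal (7 * π * R ^ 2 / (R + ‖y‖)) +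
          ENNReal.ofReal (7 * π * R ^ 2 / (R + ‖y‖))) := by
      rw [lintegral_const_mul _ (by fun_prop), lintegral_add_right _ (by fun_prop)]
      gcongr
      · exact setLIntegral_inv_norm_smul_sub_ball_zero_le y (by linarith) hR
      · exact setLIntegral_inv_norm_sub_ball_zero_le y hR
    _ = _ := by
      rw [← ENNReal.ofReal_add (by positivity) (by positivity), ← ENNReal.ofReal_mul hR.le]
      congr 1
      ring

section potentialQuotient

variable {ν : Measure ℂ} [IsFiniteMeasure ν] {M : ℝ}

lemma ae_enorm_dilationQuotient_logPot_le (hν : ∀ᵐ y ∂ν, ‖y‖ ≤ M) {t : ℝ} (ht : 0 < t) :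
    ∀ᵐ z, ‖dilationQuotient (logPot ν) t z‖ₑ ≤ ENNReal.ofReal (1 / (2 * π)) *
      ∫⁻ y, ‖dilationQuotient (fun z => Real.log ‖z - y‖) t z‖ₑ ∂ν := by
  filter_upwards [ae_integrable_log_norm_sub hν, ae_dilation ht (ae_integrable_log_norm_sub hν)]
    with z hz hz'
  have heq : dilationQuotient (logPot ν) t z =
      -(1 / (2 * π)) * ∫ y, dilationQuotient (fun z => Real.log ‖z - y‖) t z ∂ν := by
    simp only [dilationQuotient]
    rw [integral_div, integral_sub hz' hz, logPot, logPot]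
    ring
  rw [heq, enorm_mul, enorm_neg, Real.enorm_eq_ofReal (by positivity)]
  gcongr
  exact enorm_integral_le_lintegral_enorm _

lemma setLIntegral_enorm_dilationQuotient_logPot_le (hν : ∀ᵐ y ∂ν, ‖y‖ ≤ M) {t R : ℝ}
    (ht : 0 < t) (hR : 0 < R) :
    ∫⁻ z in ball 0 R, ‖dilationQuotient (logPot ν) t z‖ₑ ≤
      ENNReal.ofReal (7 * R ^ 2) * ∫⁻ y, ENNReal.ofReal (R / (R + ‖y‖)) ∂ν := by
  have hmeas : Measurable fun q : ℂ × ℂ =>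
      ‖dilationQuotient (fun z => Real.log ‖z - q.2‖) t q.1‖ₑ := by
    unfold dilationQuotient
    fun_prop
  calc
    _ ≤ ∫⁻ z in ball 0 R, ENNReal.ofReal (1 / (2 * π)) *
          ∫⁻ y, ‖dilationQuotient (fun z => Real.log ‖z - y‖) t z‖ₑ ∂ν :=
      lintegral_mono_ae (ae_restrict_of_ae (ae_enorm_dilationQuotient_logPot_le hν ht))
    _ = ENNReal.ofReal (1 / (2 * π)) *
          ∫⁻ y, (∫⁻ z in ball 0 R, ‖dilationQuotient (fun z => Real.log ‖z - y‖) t z‖ₑ) ∂ν := by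
      rw [lintegral_const_mul _ hmeas.lintegral_prod_right',
        lintegral_lintegral_swap hmeas.aemeasurable]
    _ ≤ ENNReal.ofReal (1 / (2 * π)) * ∫⁻ y, ENNReal.ofReal (14 * π * R ^ 2) *
          ENNReal.ofReal (R / (R + ‖y‖)) ∂ν := by
      gcongr with y
      refine (setLIntegral_enorm_dilationQuotient_log_le y ht hR).trans_eq ?_
      rw [← ENNReal.ofReal_mul (by positivity)]
      congr 1
      ring
    _ = _ := by
      rw [lintegral_const_mul _ (by fun_prop), ← mul_assoc, ← ENNReal.ofReal_mul (by positivity)]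
      congr 2
      field_simp
      norm_num

lemma tendsto_lintegral_div_add_norm (hν0 : ν {0} = 0) :
    Tendsto (fun R : ℝ => ∫⁻ y, ENNReal.ofReal (R / (R + ‖y‖)) ∂ν) (𝓝[>] 0) (𝓝 0) := by
  rw [← lintegral_zero (μ := ν)]
  refine tendsto_lintegral_filter_of_dominated_convergence (fun _ => 1)
    (.of_forall fun R => by fun_prop) ?_ (by simp [measure_ne_top]) ?_
  · filter_upwards [self_mem_nhdsWithin] with R (hR : 0 < R)
    refine .of_forall fun y => ENNReal.ofReal_le_one.2 (div_le_one_of_le₀ ?_ (by positivity))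
    exact le_add_of_nonneg_right (norm_nonneg y)
  · filter_upwards [compl_mem_ae_iff.2 hν0] with y hy
    have hcont : ContinuousAt (fun R : ℝ => ENNReal.ofReal (R / (R + ‖y‖))) 0 := by
      refine ENNReal.continuous_ofReal.continuousAt.comp (continuousAt_id.div (by fun_prop) ?_)
      simpa using hy
    simpa using hcont.tendsto.mono_left nhdsWithin_le_nhds

/-- The lower limit of the absolute radial difference quotients of `logPot ν`; unlike the radial
derivative itself, it is bounded in mean by Fatou's lemma with no differentiability needed. -/
def lowerRadialVariation (ν : Measure ℂ) (z : ℂ) : ENNReal :=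
  liminf (fun n : ℕ => ‖dilationQuotient (logPot ν) (1 / ((n : ℝ) + 1)) z‖ₑ) atTop

lemma measurable_enorm_dilationQuotient_logPot (ν : Measure ℂ) [SFinite ν] (t : ℝ) :
    Measurable fun z => ‖dilationQuotient (logPot ν) t z‖ₑ := by
  have := measurable_logPot ν
  unfold dilationQuotient
  fun_prop

lemma setLIntegral_lowerRadialVariation_le (hν : ∀ᵐ y ∂ν, ‖y‖ ≤ M) {R : ℝ} (hR : 0 < R) :
    ∫⁻ z in ball 0 R, lowerRadialVariation ν z ≤
      ENNReal.ofReal (7 * R ^ 2) * ∫⁻ y, ENNReal.ofReal (R / (R + ‖y‖)) ∂ν := by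
  refine (lintegral_liminf_le fun n => measurable_enorm_dilationQuotient_logPot ν _).trans ?_
  refine liminf_le_of_le (by isBoundedDefault) fun b hb => ?_
  obtain ⟨n, hn⟩ := hb.exists
  exact hn.trans (setLIntegral_enorm_dilationQuotient_logPot_le hν Nat.one_div_pos_of_nat hR)

end potentialQuotient

lemma tendsto_dilationQuotient {v : ℂ → ℝ} {z : ℂ} (hv : DifferentiableAt ℝ v z) :
    Tendsto (fun t => dilationQuotient v t z) (𝓝[≠] 0) (𝓝 (eulerDeriv v z)) := by
  have hdil : HasDerivAt (fun t : ℝ => (1 + t) • z) z 0 := by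
    simpa using ((hasDerivAt_id (0 : ℝ)).const_add 1).smul_const z
  have hv' : HasFDerivAt v (fderiv ℝ v z) ((1 + (0 : ℝ)) • z) := by simpa using hv.hasFDerivAt
  refine (hasDerivAt_iff_tendsto_slope.1 (hv'.comp_hasDerivAt (0 : ℝ) hdil)).congr fun t => ?_
  simp [slope_def_field, dilationQuotient]

lemma tendsto_dilationQuotient_seq {v : ℂ → ℝ} {z : ℂ} (hv : DifferentiableAt ℝ v z) :
    Tendsto (fun n : ℕ => dilationQuotient v (1 / ((n : ℝ) + 1)) z) atTop
      (𝓝 (eulerDeriv v z)) :=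
  (tendsto_dilationQuotient hv).comp <| tendsto_nhdsWithin_iff.2
    ⟨tendsto_one_div_add_atTop_nhds_zero_nat, .of_forall fun _ => Nat.one_div_pos_of_nat.ne'⟩

/- Where `u` is not differentiable its `fderiv` is zero, hence the positive part on the right. -/
lemma ae_ofReal_neg_eulerDeriv_le {u W : ℂ → ℝ} {ν : Measure ℂ} {R : ℝ}
    (hW : ∀ z ∈ ball 0 R \ {0}, DifferentiableAt ℝ W z)
    (hu : ∀ᵐ z, z ∈ ball 0 R \ {0} → u z - logPot ν z = W z) :
    ∀ᵐ z, z ∈ ball 0 (R / 2) \ {0} → ENNReal.ofReal (-eulerDeriv u z) ≤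
      ENNReal.ofReal (-eulerDeriv W z) + lowerRadialVariation ν z := by
  have hu' := ae_all_iff.2 fun n : ℕ => ae_dilation (Nat.one_div_pos_of_nat (α := ℝ) (n := n)) hu
  filter_upwards [hu, hu'] with z huz huz' ⟨hzR, hz0⟩
  rw [mem_ball_zero_iff] at hzR
  have hz : z ∈ ball 0 R \ {0} := ⟨mem_ball_zero_iff.2 (by linarith [norm_nonneg z]), hz0⟩
  by_cases hd : DifferentiableAt ℝ u z
  swap
  · simp [eulerDeriv, fderiv_zero_of_not_differentiableAt hd]
  have hpot : Tendsto (fun n : ℕ => dilationQuotient (logPot ν) (1 / ((n : ℝ) + 1)) z) atTop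
      (𝓝 (eulerDeriv u z - eulerDeriv W z)) := by
    refine ((tendsto_dilationQuotient_seq hd).sub
      (tendsto_dilationQuotient_seq (hW z hz))).congr fun n => ?_
    have ht1 : 1 / ((n : ℝ) + 1) ≤ 1 := div_le_one_of_le₀ (by simp) (by positivity)
    have hdil : (1 + 1 / ((n : ℝ) + 1)) • z ∈ ball (0 : ℂ) R \ {0} := by
      refine ⟨?_, smul_ne_zero (by positivity) hz0⟩
      rw [mem_ball_zero_iff, norm_smul_of_nonneg (by positivity)]
      nlinarith [norm_nonneg z]
    simp only [dilationQuotient, ← huz hz, ← huz' n hdil]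
    ring
  rw [lowerRadialVariation, hpot.enorm.liminf_eq, ← ofReal_norm, Real.norm_eq_abs]
  refine (ENNReal.ofReal_le_ofReal ?_).trans ENNReal.ofReal_add_le
  linarith [neg_abs_le (eulerDeriv u z - eulerDeriv W z)]

/-! ### Radial mollifiers -/

lemma radialLap_eq_deriv {h : ℝ → ℝ} (hh' : Differentiable ℝ (deriv h)) (q : ℝ) :
    radialLap h q = 4 * deriv (fun t => t * deriv h t) q := by
  have := ((hasDerivAt_id' q).mul (hh' q).hasDerivAt).deriv
  rw [radialLap, ← one_mul (deriv h q), ← this]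
  rfl

namespace IsRadialProfile

variable {h : ℝ → ℝ} {b : ℝ} (H : IsRadialProfile h b)

include H

lemma mono {c : ℝ} (hbc : b ≤ c) : IsRadialProfile h c where
  pos := H.pos.trans_le hbc
  contDiff := H.contDiff
  eq_zero q hq := H.eq_zero q (le_trans (pow_le_pow_left₀ H.pos.le hbc 2) hq)

lemma const_mul (c : ℝ) : IsRadialProfile (fun q => c * h q) b where
  pos := H.pos
  contDiff := contDiff_const.mul H.contDiff
  eq_zero q hq := by rw [H.eq_zero q hq, mul_zero]

lemma sub {k : ℝ → ℝ} (K : IsRadialProfile k b) : IsRadialProfile (fun q => h q - k q) b where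
  pos := H.pos
  contDiff := H.contDiff.sub K.contDiff
  eq_zero q hq := by rw [H.eq_zero q hq, K.eq_zero q hq, sub_zero]

lemma deriv : IsRadialProfile (deriv h) b where
  pos := H.pos
  contDiff := H.contDiff_deriv
  eq_zero _ := H.deriv_eq_zero

lemma exists_abs_le : ∃ C, ∀ q, 0 ≤ q → |h q| ≤ C := by
  obtain ⟨C, hC⟩ := (isCompact_Icc (a := 0) (b := b ^ 2)).exists_bound_of_continuousOn
    H.contDiff.continuous.continuousOn
  refine ⟨max C 0, fun q hq => ?_⟩
  rcases le_total q (b ^ 2) with hqb | hqb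
  · exact (hC q ⟨hq, hqb⟩).trans (le_max_left _ _)
  · rw [H.eq_zero q hqb, abs_zero]
    exact le_max_right _ _

lemma integral_radial_deriv (p : ℂ) : ∫ x, radial (_root_.deriv h) p x = -π * h 0 := by
  have hcs : HasCompactSupport fun s : ℝ => h (s ^ 2) / 2 :=
    .intro (isCompact_Icc (a := -b) (b := b)) fun s hs => by
      rw [mem_Icc, ← abs_le, not_le] at hs
      rw [H.eq_zero _ (by rw [← sq_abs s]; gcongr; exact H.pos.le), zero_div]
  have hsmooth : ContDiff ℝ 1 fun s : ℝ => h (s ^ 2) / 2 :=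
    ((H.contDiff.of_le (by exact_mod_cast le_top)).comp (contDiff_id.pow 2)).div_const 2
  have hderiv (s : ℝ) :
      _root_.deriv (fun s => h (s ^ 2) / 2) s = s * _root_.deriv h (s ^ 2) := by
    have := ((H.differentiable (s ^ 2)).hasDerivAt.comp s (hasDerivAt_pow 2 s)).div_const 2
    refine this.deriv.trans ?_
    push_cast
    ring
  calc ∫ x, radial (_root_.deriv h) p x = ∫ x : ℂ, _root_.deriv h (‖x‖ ^ 2) :=
        integral_sub_right_eq_self (fun x : ℂ => _root_.deriv h (‖x‖ ^ 2)) p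
    _ = 2 * π * ∫ s in Ioi (0 : ℝ), _root_.deriv (fun s => h (s ^ 2) / 2) s := by
        rw [integral_fun_norm_addHaar volume fun s : ℝ => _root_.deriv h (s ^ 2)]
        simp [Complex.finrank_real_complex, hderiv, Measure.real, mul_assoc]
    _ = -π * h 0 := by
        rw [hcs.integral_Ioi_deriv_eq hsmooth]
        ring_nf

/- The solution is the primitive of `h q / q`, which is smooth because `h` vanishes near `0`. -/
lemma exists_mul_deriv_eq {ε : ℝ} (hε : 0 < ε) (h0 : ∀ q < ε, h q = 0) :
    ∃ k, IsRadialProfile k b ∧ ∀ q, q * _root_.deriv k q = h q := by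
  have hsmooth : ContDiff ℝ (⊤ : ℕ∞) fun q => h q / q := by
    rw [contDiff_iff_contDiffAt]
    intro q
    by_cases hq : q = 0
    · refine (contDiffAt_const (c := (0 : ℝ))).congr_of_eventuallyEq ?_
      filter_upwards [eventually_lt_nhds (hq ▸ hε)] with t ht
      rw [h0 t ht, zero_div]
    · exact H.contDiff.contDiffAt.div contDiffAt_id hq
  have hderiv (q : ℝ) : HasDerivAt (fun q => ∫ t in (b ^ 2)..q, h t / t) (h q / q) q :=
    intervalIntegral.integral_hasDerivAt_right (hsmooth.continuous.intervalIntegrable _ _)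
      hsmooth.continuous.stronglyMeasurable.stronglyMeasurableAtFilter
      hsmooth.continuous.continuousAt
  refine ⟨fun q => ∫ t in (b ^ 2)..q, h t / t, ⟨H.pos, ?_, fun q hq => ?_⟩, fun q => ?_⟩
  · rw [contDiff_infty_iff_deriv, funext fun q => (hderiv q).deriv]
    exact ⟨fun q => (hderiv q).differentiableAt, hsmooth⟩
  · refine intervalIntegral.integral_zero_ae (.of_forall fun t ht => ?_)
    rw [uIoc_of_le hq] at ht
    rw [H.eq_zero t ht.1.le, zero_div]
  · rw [(hderiv q).deriv]
    exact mul_div_cancel_of_imp' fun hq => h0 q (hq ▸ hε)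

end IsRadialProfile

/-- A smooth cutoff profile: `1` for squared distances `≤ a²/4` and `0` for those `≥ a²`. -/
def cutoff (a q : ℝ) : ℝ := smoothTransition (4 / 3 * (1 - q / a ^ 2))

/-- The profile of a radial mollifier of mass one supported in the disc of radius `a`. Being a
derivative, it makes `mollifier a - mollifier c` the Laplacian of a compactly supported function,
see `exists_radialLap_eq_mollifier_sub`. -/
def mollifier (a q : ℝ) : ℝ := -(1 / π) * deriv (cutoff a) q

lemma cutoff_eq_one {a q : ℝ} (ha : 0 < a) (hq : q ≤ a ^ 2 / 4) : cutoff a q = 1 := by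
  have : q / a ^ 2 ≤ 1 / 4 := by rw [div_le_iff₀ (by positivity)]; linarith
  exact smoothTransition.one_of_one_le (by linarith)

lemma isRadialProfile_cutoff {a : ℝ} (ha : 0 < a) : IsRadialProfile (cutoff a) a where
  pos := ha
  contDiff := smoothTransition.contDiff.comp (by fun_prop)
  eq_zero q hq := by
    have : 1 ≤ q / a ^ 2 := by rwa [one_le_div (by positivity)]
    exact smoothTransition.zero_of_nonpos (by linarith)

lemma isRadialProfile_mollifier {a : ℝ} (ha : 0 < a) : IsRadialProfile (mollifier a) a :=
  (isRadialProfile_cutoff ha).deriv.const_mul _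

lemma integral_radial_mollifier {a : ℝ} (ha : 0 < a) (p : ℂ) :
    ∫ x, radial (mollifier a) p x = 1 := by
  have := (isRadialProfile_cutoff ha).integral_radial_deriv p
  rw [cutoff_eq_one ha (by positivity)] at this
  change ∫ x, -(1 / π) * radial (deriv (cutoff a)) p x = 1
  rw [integral_const_mul, this]
  field_simp

lemma exists_radialLap_eq_mollifier_sub {a c : ℝ} (hc : 0 < c) (hca : c ≤ a) :
    ∃ h, IsRadialProfile h a ∧ ∀ q, radialLap h q = mollifier a q - mollifier c q := by
  have ha : 0 < a := hc.trans_le hca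
  have Ha := isRadialProfile_cutoff ha
  have Hc := isRadialProfile_cutoff hc
  obtain ⟨h, H, hmul⟩ := ((Ha.sub (Hc.mono hca)).const_mul (-(1 / (4 * π)))).exists_mul_deriv_eq
    (ε := c ^ 2 / 4) (by positivity) fun q hq => by
      rw [cutoff_eq_one hc hq.le, cutoff_eq_one ha (hq.le.trans (by gcongr)), sub_self, mul_zero]
  refine ⟨h, H, fun q => ?_⟩
  rw [radialLap_eq_deriv H.differentiable_deriv, funext hmul, deriv_const_mul_field,
    deriv_fun_sub (Ha.differentiable q) (Hc.differentiable q), mollifier, mollifier]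
  field_simp
  ring

lemma mollifier_eq_scaled (a q : ℝ) :
    mollifier a q = (a ^ 2)⁻¹ * mollifier 1 ((a ^ 2)⁻¹ * q) := by
  have : cutoff a = fun q => cutoff 1 ((a ^ 2)⁻¹ * q) := by
    funext q
    rw [cutoff, cutoff, one_pow, div_one, div_eq_inv_mul q]
  rw [mollifier, mollifier, this, deriv_comp_mul_left, smul_eq_mul]
  ring

lemma deriv_mollifier_eq_scaled (a q : ℝ) :
    deriv (mollifier a) q = (a ^ 4)⁻¹ * deriv (mollifier 1) ((a ^ 2)⁻¹ * q) := by
  rw [funext (mollifier_eq_scaled a), deriv_const_mul_field, deriv_comp_mul_left, smul_eq_mul]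
  ring

lemma exists_abs_mollifier_le :
    ∃ C, ∀ a q : ℝ, 0 ≤ q → |mollifier a q| ≤ C * (a ^ 2)⁻¹ := by
  obtain ⟨C, hC⟩ := (isRadialProfile_mollifier one_pos).exists_abs_le
  refine ⟨C, fun a q hq => ?_⟩
  rw [mollifier_eq_scaled, abs_mul, abs_of_nonneg (by positivity : 0 ≤ (a ^ 2)⁻¹), mul_comm]
  gcongr
  exact hC _ (by positivity)

lemma exists_norm_fderiv_radial_mollifier_le :
    ∃ C, 0 ≤ C ∧ ∀ a : ℝ, 0 < a → ∀ x : ℂ,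
      ‖fderiv ℝ (radial (mollifier a) 0) x‖ ≤
        (closedBall 0 a).indicator (fun _ => C * (a ^ 3)⁻¹) x := by
  obtain ⟨C, hC⟩ := (isRadialProfile_mollifier one_pos).deriv.exists_abs_le
  have hC0 : 0 ≤ C := (abs_nonneg _).trans (hC 0 le_rfl)
  refine ⟨2 * C, by positivity, fun a ha x => ?_⟩
  have Ha := isRadialProfile_mollifier ha
  rw [(hasFDerivAt_radial Ha.differentiable 0 x).fderiv, norm_smul, innerSL_apply_norm, sub_zero,
    norm_mul, norm_two, Real.norm_eq_abs]
  by_cases hx : x ∈ closedBall 0 a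
  · rw [indicator_of_mem hx, deriv_mollifier_eq_scaled, abs_mul, abs_of_pos (by positivity)]
    calc 2 * ((a ^ 4)⁻¹ * |deriv (mollifier 1) ((a ^ 2)⁻¹ * ‖x‖ ^ 2)|) * ‖x‖
        ≤ 2 * ((a ^ 4)⁻¹ * C) * a := by
          gcongr
          exacts [hC _ (by positivity), mem_closedBall_zero_iff.1 hx]
      _ = 2 * C * (a ^ 3)⁻¹ := by field_simp
  · have hxa := sq_lt_norm_sub_sq ha.le hx
    rw [sub_zero] at hxa
    rw [indicator_of_notMem hx, Ha.deriv_eq_zero hxa.le]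
    simp

/-! ### Weyl's lemma -/

lemma laplacian_eq_lap {V : ℂ → ℝ} {z : ℂ} (hV : ContDiffAt ℝ 2 V z) :
    Laplacian.laplacian V z = lap V z := by
  have hd : DifferentiableAt ℝ (fderiv ℝ V) z :=
    (hV.fderiv_right (m := 1) le_rfl).differentiableAt one_ne_zero
  have hsecond (e : ℂ) : fderiv ℝ (fun w => fderiv ℝ V w e) z e = fderiv ℝ (fderiv ℝ V) z e e := by
    rw [fderiv_clm_apply hd (differentiableAt_const e)]
    simp
  simp [InnerProductSpace.laplacian_eq_iteratedFDeriv_complexPlane, iteratedFDeriv_two_apply, lap,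
    hsecond]

lemma ae_tendsto_average_norm_sub_of_locallyIntegrableOn {w : ℂ → ℝ} {Ω : Set ℂ} (hΩ : IsOpen Ω)
    (hw : LocallyIntegrableOn w Ω) :
    ∀ᵐ p, p ∈ Ω → Tendsto (fun δ => ⨍ y in closedBall p δ, ‖w y - w p‖) (𝓝[>] 0) (𝓝 0) := by
  obtain ⟨U, hU, hcover, hint⟩ := hw.exists_nat_integrableOn
  have hmeas (n : ℕ) : MeasurableSet (U n ∩ Ω) := ((hU n).inter hΩ).measurableSet
  have hleb (n : ℕ) := (Besicovitch.vitaliFamily volume).ae_tendsto_average_norm_sub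
    ((integrable_indicator_iff (hmeas n)).2 (hint n)).locallyIntegrable
  filter_upwards [ae_all_iff.2 hleb] with p hp hpΩ
  obtain ⟨n, hn⟩ := mem_iUnion.1 (hcover hpΩ)
  obtain ⟨ε, hε, hball⟩ := Metric.isOpen_iff.1 ((hU n).inter hΩ) p ⟨hn, hpΩ⟩
  refine ((hp n).comp (Besicovitch.tendsto_filterAt volume p)).congr' ?_
  filter_upwards [Ioo_mem_nhdsGT hε] with δ hδ
  have hsub : closedBall p δ ⊆ U n ∩ Ω := (closedBall_subset_ball hδ.2).trans hball
  simp only [Function.comp_apply, setAverage_eq]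
  congr 1
  refine setIntegral_congr_fun measurableSet_closedBall fun y hy => ?_
  simp only [indicator_of_mem (hsub hy), indicator_of_mem (show p ∈ U n ∩ Ω from ⟨hn, hpΩ⟩)]

section Convolution

open ContinuousLinearMap (lsmul)

variable {f ρ : ℂ → ℝ}

lemma fderiv_convolution_lsmul_apply (hf : LocallyIntegrable f) (hρ : ContDiff ℝ 1 ρ)
    (hc : HasCompactSupport ρ) (p e : ℂ) :
    fderiv ℝ (convolution f ρ (lsmul ℝ ℝ)) p e =
      convolution f (fun x => fderiv ℝ ρ x e) (lsmul ℝ ℝ) volume p := by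
  rw [(hc.hasFDerivAt_convolution_right (lsmul ℝ ℝ) hf hρ p).fderiv,
    convolution_precompR_apply _ hf (hc.fderiv ℝ) (hρ.continuous_fderiv one_ne_zero)]

lemma lap_convolution_lsmul (hf : LocallyIntegrable f) (hρ : ContDiff ℝ 2 ρ)
    (hc : HasCompactSupport ρ) (p : ℂ) :
    lap (convolution f ρ (lsmul ℝ ℝ)) p = convolution f (lap ρ) (lsmul ℝ ℝ) volume p := by
  have hsmooth (e : ℂ) : ContDiff ℝ 1 fun x => fderiv ℝ ρ x e :=
    (hρ.fderiv_right (m := 1) le_rfl).clm_apply contDiff_const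
  have hcs (e : ℂ) : HasCompactSupport fun x => fderiv ℝ ρ x e := hc.fderiv_apply ℝ e
  have hexists (e : ℂ) := ((hcs e).fderiv_apply ℝ e).convolutionExists_right (lsmul ℝ ℝ) hf
    (((hsmooth e).continuous_fderiv one_ne_zero).clm_apply continuous_const) p
  have hfirst (e : ℂ) : (fun z => fderiv ℝ (convolution f ρ (lsmul ℝ ℝ)) z e) =
      convolution f (fun x => fderiv ℝ ρ x e) (lsmul ℝ ℝ) :=
    funext fun z => fderiv_convolution_lsmul_apply hf (hρ.of_le one_le_two) hc z e
  rw [lap, hfirst, hfirst, fderiv_convolution_lsmul_apply hf (hsmooth _) (hcs _),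
    fderiv_convolution_lsmul_apply hf (hsmooth _) (hcs _),
    ← (hexists 1).distrib_add (hexists Complex.I)]
  rfl

lemma convolution_indicator_lsmul {w g : ℂ → ℝ} {p p₀ : ℂ} {a : ℝ} (hp : p ∈ ball p₀ a)
    (hg : ∀ x ∉ closedBall 0 a, g x = 0) :
    convolution ((closedBall p₀ (2 * a)).indicator w) g (lsmul ℝ ℝ) volume p =
      ∫ x, w x * g (p - x) := by
  refine integral_congr_ae (.of_forall fun x => ?_)
  by_cases hx : p - x ∈ closedBall 0 a
  · have hmem : x ∈ closedBall p₀ (2 * a) := by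
      rw [mem_closedBall_zero_iff, ← dist_eq_norm, dist_comm] at hx
      rw [mem_closedBall]
      linarith [dist_triangle x p p₀, mem_ball.1 hp]
    simp [indicator_of_mem hmem]
  · simp [hg _ hx]

end Convolution

/-- The weighted mean of `w` over the disc of radius `a` about `p`, with weight `mollifier a`. -/
def mollify (w : ℂ → ℝ) (a : ℝ) (p : ℂ) : ℝ := ∫ x, w x * radial (mollifier a) p x

/-- Harmonicity on `Ω` in the sense of distributions, tested against radial functions only. -/
def IsWeaklyHarmonicOn (w : ℂ → ℝ) (Ω : Set ℂ) : Prop :=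
  ∀ ⦃h : ℝ → ℝ⦄ ⦃b : ℝ⦄ ⦃p : ℂ⦄, IsRadialProfile h b → closedBall p b ⊆ Ω →
    ∫ x, w x * lap (radial h p) x = 0

/-- The harmonic representative of a weakly harmonic function provided by Weyl's lemma; the limit
exists because the means stabilize, see `IsWeaklyHarmonicOn.mollify_eq_of_le`. -/
def weylRep (w : ℂ → ℝ) (p : ℂ) : ℝ := limUnder (𝓝[>] 0) fun a => mollify w a p

lemma integrable_mul_of_forall_notMem_eq_zero {w g : ℂ → ℝ} {K : Set ℂ} (hK : IsCompact K)
    (hw : IntegrableOn w K) (hg : Continuous g) (hg0 : ∀ x ∉ K, g x = 0) :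
    Integrable fun x => w x * g x := by
  rw [← integrableOn_iff_integrable_of_support_subset (s := K)]
  · exact hw.mul_continuousOn hg.continuousOn hK
  · exact Function.support_subset_iff'.2 fun x hx => by rw [hg0 x hx, mul_zero]

lemma IsRadialProfile.integrable_mul_radial {h : ℝ → ℝ} {b : ℝ} (H : IsRadialProfile h b)
    {w : ℂ → ℝ} {p : ℂ} (hw : IntegrableOn w (closedBall p b)) :
    Integrable fun x => w x * radial h p x :=
  integrable_mul_of_forall_notMem_eq_zero (isCompact_closedBall p b) hw
    (contDiff_radial H.contDiff p).continuous fun _ => H.radial_eq_zero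

lemma exists_abs_mollify_sub_le :
    ∃ C, ∀ (w : ℂ → ℝ) (p : ℂ) (t δ : ℝ), 0 < δ → IntegrableOn w (closedBall p δ) →
      |mollify w δ p - t| ≤ C * ⨍ y in closedBall p δ, ‖w y - t‖ := by
  obtain ⟨C, hC⟩ := exists_abs_mollifier_le
  refine ⟨C * π, fun w p t δ hδ hw => ?_⟩
  have Hδ := isRadialProfile_mollifier hδ
  have ht : IntegrableOn (fun _ => t) (closedBall p δ) :=
    integrableOn_const measure_closedBall_lt_top.ne
  have hdiff : mollify w δ p - t = ∫ x, (w x - t) * radial (mollifier δ) p x := by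
    simp_rw [sub_mul]
    rw [integral_sub (Hδ.integrable_mul_radial hw) (Hδ.integrable_mul_radial ht),
      integral_const_mul, integral_radial_mollifier hδ, mul_one, mollify]
  have hbound (x : ℂ) : ‖(w x - t) * radial (mollifier δ) p x‖ ≤
      (closedBall p δ).indicator (fun x => C * (δ ^ 2)⁻¹ * ‖w x - t‖) x := by
    by_cases hx : x ∈ closedBall p δ
    · rw [indicator_of_mem hx, norm_mul, mul_comm]
      gcongr
      exact hC δ _ (by positivity)
    · rw [indicator_of_notMem hx, Hδ.radial_eq_zero hx, mul_zero, norm_zero]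
  calc |mollify w δ p - t|
      ≤ ∫ x, (closedBall p δ).indicator (fun x => C * (δ ^ 2)⁻¹ * ‖w x - t‖) x := by
        rw [hdiff, ← Real.norm_eq_abs]
        refine norm_integral_le_of_norm_le ?_ (.of_forall hbound)
        exact IntegrableOn.integrable_indicator ((hw.sub ht).norm.const_mul _)
          measurableSet_closedBall
    _ = C * π * ⨍ y in closedBall p δ, ‖w y - t‖ := by
        have hvol : volume.real (closedBall p δ) = π * δ ^ 2 := by
          rw [Measure.real, Measure.addHaar_closedBall_eq_addHaar_ball,
            volume_ball_eq_ofReal p hδ.le, ENNReal.toReal_ofReal (by positivity)]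
        rw [integral_indicator measurableSet_closedBall, integral_const_mul, setAverage_eq, hvol,
          smul_eq_mul]
        field_simp

namespace IsWeaklyHarmonicOn

variable {w : ℂ → ℝ} {Ω : Set ℂ} (Hw : IsWeaklyHarmonicOn w Ω) (hw : LocallyIntegrableOn w Ω)

include Hw hw

lemma mollify_eq_of_le {a c : ℝ} {p : ℂ} (hc : 0 < c) (hca : c ≤ a) (hp : closedBall p a ⊆ Ω) :
    mollify w a p = mollify w c p := by
  obtain ⟨h, H, hlap⟩ := exists_radialLap_eq_mollifier_sub hc hca
  have hint {b : ℝ} (hb : 0 < b) (hba : b ≤ a) :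
      Integrable fun x => w x * radial (mollifier b) p x :=
    (isRadialProfile_mollifier hb).integrable_mul_radial (hw.integrableOn_compact_subset
      ((closedBall_subset_closedBall hba).trans hp) (isCompact_closedBall p b))
  rw [mollify, mollify, ← sub_eq_zero, ← integral_sub (hint H.pos le_rfl) (hint hc hca),
    ← Hw H hp]
  simp_rw [H.lap_radial, hlap, mul_sub, radial]

lemma weylRep_eq_mollify {a : ℝ} {p : ℂ} (ha : 0 < a) (hp : closedBall p a ⊆ Ω) :
    weylRep w p = mollify w a p := by
  refine (tendsto_const_nhds.congr' ?_).limUnder_eq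
  filter_upwards [Ioc_mem_nhdsGT ha] with c hc using Hw.mollify_eq_of_le hw hc.1 hc.2 hp

lemma weylRep_eq_convolution {a : ℝ} {p p₀ : ℂ} (ha : 0 < a) (hp₀ : closedBall p₀ (2 * a) ⊆ Ω)
    (hp : p ∈ ball p₀ a) :
    weylRep w p = convolution ((closedBall p₀ (2 * a)).indicator w) (radial (mollifier a) 0)
      (ContinuousLinearMap.lsmul ℝ ℝ) volume p := by
  have hsub : closedBall p a ⊆ closedBall p₀ (2 * a) :=
    closedBall_subset_closedBall' (by linarith [mem_ball.1 hp])
  rw [convolution_indicator_lsmul hp fun x => (isRadialProfile_mollifier ha).radial_eq_zero,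
    Hw.weylRep_eq_mollify hw ha (hsub.trans hp₀), mollify]
  simp_rw [radial_eq_radial_zero_sub _ p]

omit Hw in
lemma locallyIntegrable_indicator_closedBall {a : ℝ} {p : ℂ} (hp : closedBall p a ⊆ Ω) :
    LocallyIntegrable ((closedBall p a).indicator w) :=
  ((hw.integrableOn_compact_subset hp (isCompact_closedBall p a)).integrable_indicator
    measurableSet_closedBall).locallyIntegrable

omit hw in
lemma convolution_lap_radial_eq_zero {a : ℝ} {p p₀ : ℂ} (ha : 0 < a)
    (hp₀ : closedBall p₀ (2 * a) ⊆ Ω) (hp : p ∈ ball p₀ a) :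
    convolution ((closedBall p₀ (2 * a)).indicator w) (lap (radial (mollifier a) 0))
      (ContinuousLinearMap.lsmul ℝ ℝ) volume p = 0 := by
  have Ha := isRadialProfile_mollifier ha
  have hsub : closedBall p a ⊆ closedBall p₀ (2 * a) :=
    closedBall_subset_closedBall' (by linarith [mem_ball.1 hp])
  rw [convolution_indicator_lsmul hp fun x => Ha.lap_radial_eq_zero, ← Hw Ha (hsub.trans hp₀)]
  simp_rw [Ha.lap_radial, sub_zero, norm_sub_rev p]

/-- **Weyl's lemma**, regularity. -/
lemma harmonicOnNhd_weylRep (hΩ : IsOpen Ω) :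
    InnerProductSpace.HarmonicOnNhd (weylRep w) Ω := by
  intro p₀ hp₀
  obtain ⟨a, ha, hball⟩ : ∃ a > 0, closedBall p₀ (2 * a) ⊆ Ω := by
    obtain ⟨ε, hε, hsub⟩ := nhds_basis_closedBall.mem_iff.1 (hΩ.mem_nhds hp₀)
    exact ⟨ε / 2, by positivity, by rwa [mul_div_cancel₀ ε two_ne_zero]⟩
  have hint := locallyIntegrable_indicator_closedBall hw hball
  have Ha := isRadialProfile_mollifier ha
  have hcs := Ha.hasCompactSupport_radial 0
  have hρ : ContDiff ℝ 2 (radial (mollifier a) 0) :=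
    contDiff_infty.1 (contDiff_radial Ha.contDiff 0) 2
  have hsmooth := hcs.contDiff_convolution_right (ContinuousLinearMap.lsmul ℝ ℝ) hint hρ
  have hmem : ball p₀ a ∈ 𝓝 p₀ := ball_mem_nhds p₀ ha
  rw [InnerProductSpace.harmonicAt_congr_nhds
    (mem_of_superset hmem fun q => Hw.weylRep_eq_convolution hw ha hball)]
  refine ⟨hsmooth.contDiffAt, ?_⟩
  filter_upwards [hmem] with q hq
  rw [laplacian_eq_lap hsmooth.contDiffAt, lap_convolution_lsmul hint hρ hcs,
    Hw.convolution_lap_radial_eq_zero ha hball hq, Pi.zero_apply]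

/-- **Weyl's lemma**, identification. -/
lemma ae_eq_weylRep (hΩ : IsOpen Ω) : ∀ᵐ p, p ∈ Ω → w p = weylRep w p := by
  obtain ⟨C, hC⟩ := exists_abs_mollify_sub_le
  filter_upwards [ae_tendsto_average_norm_sub_of_locallyIntegrableOn hΩ hw] with p hleb hp
  obtain ⟨ε, hε, hball⟩ := nhds_basis_closedBall.mem_iff.1 (hΩ.mem_nhds hp)
  have hbound : ∀ᶠ δ in 𝓝[>] (0 : ℝ),
      |weylRep w p - w p| ≤ C * ⨍ y in closedBall p δ, ‖w y - w p‖ := by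
    filter_upwards [Ioc_mem_nhdsGT hε] with δ hδ
    have hsub := (closedBall_subset_closedBall hδ.2).trans hball
    rw [Hw.weylRep_eq_mollify hw hδ.1 hsub]
    exact hC w p _ δ hδ.1 (hw.integrableOn_compact_subset hsub (isCompact_closedBall p δ))
  have hlim := ge_of_tendsto ((hleb hp).const_mul C) hbound
  rw [mul_zero, abs_nonpos_iff, sub_eq_zero] at hlim
  exact hlim.symm

end IsWeaklyHarmonicOn

lemma exists_norm_fderiv_weylRep_le :
    ∃ C, 0 ≤ C ∧ ∀ {w : ℂ → ℝ} {Ω : Set ℂ}, IsWeaklyHarmonicOn w Ω → LocallyIntegrableOn w Ω →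
      ∀ {p : ℂ} {a : ℝ}, 0 < a → closedBall p (2 * a) ⊆ Ω →
        ‖fderiv ℝ (weylRep w) p‖ ≤ C * (a ^ 3)⁻¹ * ∫ x in closedBall p a, |w x| := by
  obtain ⟨C, hC0, hC⟩ := exists_norm_fderiv_radial_mollifier_le
  refine ⟨C, hC0, fun {w Ω} Hw hw {p a} ha hball => ?_⟩
  have Ha := isRadialProfile_mollifier ha
  have hsub : closedBall p a ⊆ closedBall p (2 * a) := closedBall_subset_closedBall (by linarith)
  have hint : IntegrableOn w (closedBall p a) :=
    hw.integrableOn_compact_subset (hsub.trans hball) (isCompact_closedBall p a)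
  have hloc : weylRep w =ᶠ[𝓝 p] _ :=
    mem_of_superset (ball_mem_nhds p ha) fun q => Hw.weylRep_eq_convolution hw ha hball
  have hderiv := (Ha.hasCompactSupport_radial 0).hasFDerivAt_convolution_right
    (ContinuousLinearMap.lsmul ℝ ℝ)
    (IsWeaklyHarmonicOn.locallyIntegrable_indicator_closedBall hw hball)
    (contDiff_infty.1 (contDiff_radial Ha.contDiff 0) 1) p
  rw [hloc.fderiv_eq, hderiv.fderiv, ← integral_const_mul,
    ← integral_indicator measurableSet_closedBall]
  refine norm_integral_le_of_norm_le
    (IntegrableOn.integrable_indicator (hint.abs.const_mul _) measurableSet_closedBall)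
    (.of_forall fun t => ?_)
  have hmem : p - t ∈ closedBall 0 a ↔ t ∈ closedBall p a := by
    rw [mem_closedBall_zero_iff, mem_closedBall, dist_comm, dist_eq_norm]
  have hderiv_le := hC a ha (p - t)
  change ‖(closedBall p (2 * a)).indicator w t • fderiv ℝ (radial (mollifier a) 0) (p - t)‖ ≤ _
  rw [norm_smul]
  by_cases ht : t ∈ closedBall p a
  · rw [indicator_of_mem (hmem.2 ht)] at hderiv_le
    rw [indicator_of_mem ht, indicator_of_mem (hsub ht), mul_comm, Real.norm_eq_abs]
    gcongr
  · rw [indicator_of_notMem (mt hmem.1 ht)] at hderiv_le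
    rw [indicator_of_notMem ht, norm_le_zero_iff.1 hderiv_le, norm_zero, mul_zero]

/-! ### Harmonic functions on a punctured disk -/

lemma isOpen_ball_diff_singleton (c : ℂ) (R : ℝ) : IsOpen (ball c R \ {c}) :=
  isOpen_ball.sdiff isClosed_singleton

lemma sphere_subset_ball_diff_center {c : ℂ} {R s : ℝ} (hs : s ∈ Ioo 0 R) :
    sphere c s ⊆ ball c R \ {c} := fun _ hz =>
  ⟨sphere_subset_ball hs.2 hz, ne_of_mem_sphere hz hs.1.ne'⟩

lemma circleAverage_eq_of_differentiableOn {E : Type*} [NormedAddCommGroup E] [NormedSpace ℂ E]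
    [CompleteSpace E] {f : ℂ → E} {c : ℂ} {R r s : ℝ}
    (hf : DifferentiableOn ℂ f (ball c R \ {c})) (hr : r ∈ Ioo 0 R) (hs : s ∈ Ioo 0 R) :
    circleAverage f c r = circleAverage f c s := by
  wlog hrs : r ≤ s generalizing r s
  · exact (this hs hr (le_of_not_ge hrs)).symm
  rw [circleAverage_eq_circleIntegral hr.1.ne', circleAverage_eq_circleIntegral hs.1.ne',
    Complex.circleIntegral_sub_center_inv_smul_eq_of_differentiable_on_annulus_off_countable
      hr.1 hrs countable_empty]
  · exact hf.continuousOn.mono fun z hz =>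
      ⟨closedBall_subset_ball hs.2 hz.1, ne_of_mem_of_not_mem (mem_ball_self hr.1) hz.2 |>.symm⟩
  · exact fun z hz => hf.differentiableAt <| (isOpen_ball_diff_singleton c R).mem_nhds
      ⟨ball_subset_ball hs.2.le hz.1.1,
        ne_of_mem_of_not_mem (mem_closedBall_self hr.1.le) hz.1.2 |>.symm⟩

lemma hasDerivAt_comp_circleMap_zero {W : ℂ → ℝ} {t θ : ℝ} (ht : t ≠ 0)
    (hW : DifferentiableAt ℝ W (circleMap 0 t θ)) :
    HasDerivAt (fun t => W (circleMap 0 t θ)) (t⁻¹ * eulerDeriv W (circleMap 0 t θ)) t := by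
  have hsmul : ∀ t : ℝ, circleMap 0 t θ = t • Complex.exp (θ * Complex.I) := fun t => by
    simp [circleMap]
  have hray : HasDerivAt (fun t : ℝ => circleMap 0 t θ) (Complex.exp (θ * Complex.I)) t := by
    simpa [circleMap] using
      (Complex.ofRealCLM.hasDerivAt (x := t)).mul_const (Complex.exp (θ * Complex.I))
  refine (hW.hasFDerivAt.comp_hasDerivAt t hray).congr_deriv ?_
  conv_lhs => rw [← inv_smul_smul₀ ht (Complex.exp (θ * Complex.I)), ← hsmul, map_smul]
  rfl

lemma circleAverage_sub_circleAverage {W : ℂ → ℝ} {R r s : ℝ}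
    (hW : ContDiffOn ℝ 1 W (ball 0 R \ {0})) (hr : r ∈ Ioo 0 R) (hs : s ∈ Ioo 0 R) :
    circleAverage W 0 s - circleAverage W 0 r =
      ∫ t in r..s, t⁻¹ * circleAverage (eulerDeriv W) 0 t := by
  have hU := isOpen_ball_diff_singleton 0 R
  have hpos : ∀ {t}, t ∈ uIcc r s → 0 < t := fun ht => (ordConnected_Ioo.uIcc_subset hr hs ht).1
  have hmem : ∀ {t}, t ∈ uIcc r s → ∀ θ, circleMap 0 t θ ∈ ball 0 R \ {0} := fun ht θ =>
    sphere_subset_ball_diff_center (ordConnected_Ioo.uIcc_subset hr hs ht)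
      (circleMap_mem_sphere 0 (hpos ht).le θ)
  have hint : ∀ {t}, t ∈ Ioo 0 R → CircleIntegrable W 0 t := fun ht =>
    (hW.continuousOn.mono (sphere_subset_ball_diff_center ht)).circleIntegrable ht.1.le
  have hcont : ContinuousOn (fun p : ℝ × ℝ => p.2⁻¹ * eulerDeriv W (circleMap 0 p.2 p.1))
      (univ ×ˢ uIcc r s) :=
    (ContinuousOn.inv₀ (by fun_prop) fun p hp => (hpos hp.2).ne').mul <|
      ((hW.continuousOn_fderiv_of_isOpen hU le_rfl).clm_apply continuousOn_id).comp
        (continuous_uncurry_circleMap_zero.comp continuous_swap).continuousOn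
        fun p hp => hmem hp.2 p.1
  have hray : ∀ θ, W (circleMap 0 s θ) - W (circleMap 0 r θ) =
      ∫ t in r..s, t⁻¹ * eulerDeriv W (circleMap 0 t θ) := fun θ =>
    (intervalIntegral.integral_eq_sub_of_hasDerivAt
      (fun t ht => hasDerivAt_comp_circleMap_zero (hpos ht).ne'
        ((hW.differentiableOn one_ne_zero).differentiableAt (hU.mem_nhds (hmem ht θ))))
      (hcont.comp (f := fun t : ℝ => (θ, t)) (by fun_prop)
        fun t ht => ⟨mem_univ θ, ht⟩).intervalIntegrable).symm
  calc
    _ = (2 * π)⁻¹ * ∫ θ in 0..2 * π, ∫ t in r..s, t⁻¹ * eulerDeriv W (circleMap 0 t θ) := by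
      rw [circleAverage_def, circleAverage_def, ← smul_sub,
        ← intervalIntegral.integral_sub (hint hs) (hint hr)]
      simp only [hray, smul_eq_mul]
    _ = (2 * π)⁻¹ * ∫ t in r..s, ∫ θ in 0..2 * π, t⁻¹ * eulerDeriv W (circleMap 0 t θ) := by
      rw [intervalIntegral_intervalIntegral_swap]
      exact ((hcont.mono (prod_mono_left (subset_univ _))).integrableOn_compact
        (isCompact_uIcc.prod isCompact_uIcc)).mono_set
        (prod_mono uIoc_subset_uIcc uIoc_subset_uIcc)
    _ = _ := by
      simp only [circleAverage_def, smul_eq_mul, intervalIntegral.integral_const_mul,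
        mul_left_comm (_⁻¹ : ℝ) (2 * π)⁻¹]

/-- The holomorphic companion `2z ∂W/∂z = z (W_x - i W_y)` of the radial derivative: its real part
is `eulerDeriv W`, and it is holomorphic where `W` is harmonic. -/
def complexEulerDeriv (W : ℂ → ℝ) (z : ℂ) : ℂ :=
  z * (fderiv ℝ W z 1 - Complex.I * fderiv ℝ W z Complex.I)

lemma eulerDeriv_eq_re_mul_add_im_mul (W : ℂ → ℝ) (z : ℂ) :
    eulerDeriv W z = z.re * fderiv ℝ W z 1 + z.im * fderiv ℝ W z Complex.I := by
  have hz : z = z.re • (1 : ℂ) + z.im • Complex.I := by simp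
  rw [eulerDeriv]
  conv_lhs => enter [2]; rw [hz]
  simp only [map_add, map_smul, smul_eq_mul]

lemma re_complexEulerDeriv (W : ℂ → ℝ) (z : ℂ) : (complexEulerDeriv W z).re = eulerDeriv W z := by
  simp [complexEulerDeriv, eulerDeriv_eq_re_mul_add_im_mul]

lemma norm_complexEulerDeriv_le (W : ℂ → ℝ) (z : ℂ) :
    ‖complexEulerDeriv W z‖ ≤ 2 * ‖z‖ * ‖fderiv ℝ W z‖ := by
  have hone : |fderiv ℝ W z 1| ≤ ‖fderiv ℝ W z‖ := by simpa using (fderiv ℝ W z).le_opNorm 1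
  have hI : |fderiv ℝ W z Complex.I| ≤ ‖fderiv ℝ W z‖ := by
    simpa using (fderiv ℝ W z).le_opNorm Complex.I
  calc
    _ ≤ ‖z‖ * (|fderiv ℝ W z 1| + |fderiv ℝ W z Complex.I|) := by
      rw [complexEulerDeriv, norm_mul]
      gcongr
      refine (norm_sub_le _ _).trans_eq ?_
      simp
    _ ≤ ‖z‖ * (‖fderiv ℝ W z‖ + ‖fderiv ℝ W z‖) := by gcongr
    _ = _ := by ring

lemma differentiableOn_complexEulerDeriv {W : ℂ → ℝ} {Ω : Set ℂ}
    (hW : InnerProductSpace.HarmonicOnNhd W Ω) : DifferentiableOn ℂ (complexEulerDeriv W) Ω :=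
  fun z hz => (differentiableAt_id.mul
    (HarmonicAt.differentiableAt_complex_partial (hW z hz))).differentiableWithinAt

lemma circleAverage_eulerDeriv {W : ℂ → ℝ} {R s : ℝ}
    (hW : InnerProductSpace.HarmonicOnNhd W (ball 0 R \ {0})) (hs : s ∈ Ioo 0 R) :
    circleAverage (eulerDeriv W) 0 s = (circleAverage (complexEulerDeriv W) 0 s).re := by
  rw [← Complex.reCLM_apply, ← ContinuousLinearMap.circleAverage_comp_comm]
  · simp [Function.comp_def, re_complexEulerDeriv]
  · exact ((differentiableOn_complexEulerDeriv hW).continuousOn.mono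
      (sphere_subset_ball_diff_center hs)).circleIntegrable hs.1.le

lemma exists_circleAverage_eq_mul_log_add {W : ℂ → ℝ} {R : ℝ}
    (hW : InnerProductSpace.HarmonicOnNhd W (ball 0 R \ {0})) :
    ∃ A B, ∀ s ∈ Ioo 0 R, circleAverage (eulerDeriv W) 0 s = A ∧
      circleAverage W 0 s = A * Real.log s + B := by
  rcases le_or_gt R 0 with hR | hR
  · exact ⟨0, 0, fun s hs => absurd (hs.1.trans hs.2) hR.not_gt⟩
  set r := R / 2
  have hr : r ∈ Ioo 0 R := ⟨half_pos hR, half_lt_self hR⟩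
  have hQ := differentiableOn_complexEulerDeriv hW
  have hW1 : ContDiffOn ℝ 1 W (ball 0 R \ {0}) := fun z hz =>
    ((hW z hz).1.of_le one_le_two).contDiffWithinAt
  have hconst : ∀ s ∈ Ioo 0 R, circleAverage (eulerDeriv W) 0 s =
      (circleAverage (complexEulerDeriv W) 0 r).re := fun s hs => by
    rw [circleAverage_eq_of_differentiableOn hQ hr hs, circleAverage_eulerDeriv hW hs]
  set A := (circleAverage (complexEulerDeriv W) 0 r).re
  refine ⟨A, circleAverage W 0 r - A * Real.log r, fun s hs => ⟨hconst s hs, ?_⟩⟩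
  have hdiff : circleAverage W 0 s - circleAverage W 0 r = A * (Real.log s - Real.log r) := by
    rw [circleAverage_sub_circleAverage hW1 hr hs, ← Real.log_div hs.1.ne' hr.1.ne',
      ← integral_inv_of_pos hr.1 hs.1, ← intervalIntegral.integral_const_mul]
    refine intervalIntegral.integral_congr fun t ht => ?_
    rw [hconst t (ordConnected_Ioo.uIcc_subset hr hs ht), mul_comm]
  linarith

lemma exp_circleAverage_le {f : ℂ → ℝ} {c : ℂ} {s : ℝ} (hs : 0 ≤ s)
    (hf : ContinuousOn f (sphere c s)) :
    Real.exp (circleAverage f c s) ≤ circleAverage (fun z => Real.exp (f z)) c s := by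
  set m := circleAverage f c s with hm
  have hint : CircleIntegrable f c s := hf.circleIntegrable hs
  have hsub : CircleIntegrable (fun z => f z - m) c s := hint.sub (circleIntegrable_const m c s)
  calc
    _ = circleAverage (fun z => Real.exp m • ((f z - m) + 1)) c s := by
      rw [circleAverage_fun_smul, circleAverage_fun_add hsub (circleIntegrable_const 1 c s),
        circleAverage_fun_sub hint (circleIntegrable_const m c s), circleAverage_const,
        circleAverage_const, ← hm, sub_self, zero_add, smul_eq_mul, mul_one]
    _ ≤ _ := by
      refine circleAverage_mono ((hsub.add (circleIntegrable_const 1 c s)).const_smul)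
        (hf.rexp.circleIntegrable hs) fun z _ => ?_
      rw [smul_eq_mul, ← sub_add_cancel (f z) m, Real.exp_add, sub_add_cancel, mul_comm]
      exact mul_le_mul_of_nonneg_right (Real.add_one_le_exp _) (Real.exp_pos m).le

/- By Jensen `s ^ (2A)` is at most a constant times the mean of `e ^ (2W)` over `‖z‖ = s`. -/
lemma neg_one_lt_of_circleAverage_eq_mul_log_add {W : ℂ → ℝ} {R A B : ℝ} (hR : 0 < R)
    (hcont : ContinuousOn W (ball 0 R \ {0}))
    (hW : ∀ s ∈ Ioo 0 R, circleAverage W 0 s = A * Real.log s + B)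
    (hexp : IntegrableOn (fun z => Real.exp (2 * W z)) (ball 0 R)) : -1 < A := by
  have hpolar := integrableOn_mul_circleAverage measurableSet_Ioo Ioo_subset_Ioi_self
    (hexp.mono_set ((norm_preimage_Ioo_zero R).trans_subset sdiff_subset))
  have hpow : IntegrableOn (fun s : ℝ => s ^ (2 * A + 1)) (Ioo 0 R) := by
    refine (hpolar.const_mul (Real.exp (-2 * B))).mono' (by fun_prop)
      ((ae_restrict_iff' measurableSet_Ioo).2 <| .of_forall fun s hs => ?_)
    have hjensen := exp_circleAverage_le (f := fun z => 2 * W z) hs.1.le <|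
      continuousOn_const.mul (hcont.mono (sphere_subset_ball_diff_center hs))
    calc
      _ = Real.exp (-2 * B) * (s * Real.exp (2 * (A * Real.log s + B))) := by
        rw [Real.norm_of_nonneg (by positivity [hs.1]), Real.rpow_add_one hs.1.ne',
          Real.rpow_def_of_pos hs.1, mul_left_comm (Real.exp _) s, ← Real.exp_add, mul_comm s]
        ring_nf
      _ ≤ _ := by
        rw [← hW s hs]
        gcongr
        · exact hs.1.le
        · simpa [circleAverage_fun_smul, ← smul_eq_mul] using hjensen
  linarith [(intervalIntegral.integrableOn_Ioo_rpow_iff hR).1 hpow]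

/- Uses `|x| = 2 x⁺ - x` and `2 x ≤ s² e ^ (2 x) - 2 log s`. -/
lemma abs_le_sq_mul_exp_add {s : ℝ} (hs : 0 < s) (x : ℝ) :
    |x| ≤ s ^ 2 * Real.exp (2 * x) + 2 * |Real.log s| - x := by
  have hexp : s ^ 2 * Real.exp (2 * x) = Real.exp (2 * (Real.log s + x)) := by
    rw [mul_add, Real.exp_add, two_mul (Real.log s), Real.exp_add, Real.exp_log hs, sq]
  rcases le_total x 0 with hx | hx
  · rw [abs_of_nonpos hx]
    linarith [show 0 ≤ s ^ 2 * Real.exp (2 * x) + 2 * |Real.log s| by positivity]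
  · rw [abs_of_nonneg hx, hexp]
    linarith [neg_abs_le (Real.log s), Real.add_one_le_exp (2 * (Real.log s + x))]

lemma circleAverage_abs_le {W : ℂ → ℝ} {c : ℂ} {s : ℝ} (hs : 0 < s)
    (hW : ContinuousOn W (sphere c s)) :
    circleAverage (fun z => |W z|) c s ≤
      s ^ 2 * circleAverage (fun z => Real.exp (2 * W z)) c s + 2 * |Real.log s| -
        circleAverage W c s := by
  have hint : CircleIntegrable W c s := hW.circleIntegrable hs.le
  have hintexp : CircleIntegrable (fun z => s ^ 2 * Real.exp (2 * W z)) c s :=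
    (continuousOn_const.mul (continuousOn_const.mul hW).rexp).circleIntegrable hs.le
  have hintadd : CircleIntegrable (fun z => s ^ 2 * Real.exp (2 * W z) + 2 * |Real.log s|) c s :=
    hintexp.add (circleIntegrable_const (2 * |Real.log s|) c s)
  calc
    _ ≤ circleAverage (fun z => s ^ 2 * Real.exp (2 * W z) + 2 * |Real.log s| - W z) c s :=
      circleAverage_mono (hW.abs.circleIntegrable hs.le) (hintadd.sub hint)
        fun z _ => abs_le_sq_mul_exp_add hs (W z)
    _ = _ := by
      rw [circleAverage_fun_sub hintadd hint, circleAverage_fun_add hintexp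
        (circleIntegrable_const _ c s), circleAverage_const]
      simp_rw [← smul_eq_mul (s ^ 2), circleAverage_fun_smul]

lemma integrableOn_circleAverage_abs {W : ℂ → ℝ} {R A B : ℝ}
    (hcont : ContinuousOn W (ball 0 R \ {0}))
    (hW : ∀ s ∈ Ioo 0 R, circleAverage W 0 s = A * Real.log s + B)
    (hexp : IntegrableOn (fun z => Real.exp (2 * W z)) (ball 0 R)) :
    IntegrableOn (fun s => circleAverage (fun z => |W z|) 0 s) (Ioo 0 R) := by
  have hpolar := integrableOn_mul_circleAverage measurableSet_Ioo Ioo_subset_Ioi_self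
    (hexp.mono_set ((norm_preimage_Ioo_zero R).trans_subset sdiff_subset))
  have hlog : IntegrableOn Real.log (Ioo 0 R) :=
    (intervalIntegral.intervalIntegrable_log' (a := 0) (b := R)).1.mono_set Ioo_subset_Ioc_self
  have hmaj : IntegrableOn (fun s => R * (s * circleAverage (fun z => Real.exp (2 * W z)) 0 s) +
      2 * |Real.log s| - (A * Real.log s + B)) (Ioo 0 R) :=
    ((hpolar.const_mul R).add (hlog.abs.const_mul 2)).sub ((hlog.const_mul A).add (by simp))
  have hnorm : {z : ℂ | ‖z - 0‖ ∈ Ioo 0 R} = ball 0 R \ {0} := by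
    simp only [sub_zero, ← norm_preimage_Ioo_zero, preimage]
  have hmeas := (ContinuousOn.circleAverage (hnorm ▸ hcont.abs)
    fun s hs => hs.1.le).aestronglyMeasurable (μ := volume) measurableSet_Ioo
  refine hmaj.mono' hmeas ((ae_restrict_iff' measurableSet_Ioo).2 <| .of_forall fun s hs => ?_)
  have hnonneg : ∀ g : ℂ → ℝ, (∀ z, 0 ≤ g z) → 0 ≤ circleAverage g 0 s := fun g hg =>
    circleAverage_nonneg_of_nonneg fun z _ => hg z
  calc
    _ = circleAverage (fun z => |W z|) 0 s := Real.norm_of_nonneg (hnonneg _ fun z => abs_nonneg _)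
    _ ≤ s * (s * circleAverage (fun z => Real.exp (2 * W z)) 0 s) + 2 * |Real.log s| -
          (A * Real.log s + B) := by
      rw [← mul_assoc, ← sq, ← hW s hs]
      exact circleAverage_abs_le hs.1 (hcont.mono (sphere_subset_ball_diff_center hs))
    _ ≤ _ := by
      gcongr
      · exact mul_nonneg hs.1.le (hnonneg _ fun z => (Real.exp_pos _).le)
      · exact hs.2.le

lemma integrableOn_norm_preimage_Ioo {E : Type*} [NormedAddCommGroup E] {f : ℂ → E} {R a b : ℝ}
    (hcont : ContinuousOn f (ball 0 R \ {0})) (ha : 0 < a) (hb : b < R) :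
    IntegrableOn f (norm ⁻¹' Ioo a b) := by
  have hsub : closedBall 0 b \ ball 0 a ⊆ ball (0 : ℂ) R \ {0} := fun z hz =>
    ⟨closedBall_subset_ball hb hz.1, fun h => hz.2 (h ▸ mem_ball_self ha)⟩
  refine ((hcont.mono hsub).integrableOn_compact
    ((isCompact_closedBall 0 b).diff isOpen_ball)).mono_set fun z hz => ?_
  exact ⟨mem_closedBall_zero_iff.2 hz.2.le, fun h => (mem_ball_zero_iff.1 h).not_gt hz.1⟩

lemma tendsto_inv_mul_setIntegral_norm_preimage {f : ℂ → ℝ} {R : ℝ} (hR : 0 < R)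
    (hcont : ContinuousOn f (ball 0 R \ {0})) (hf : ∀ z, 0 ≤ f z)
    (hint : IntegrableOn (circleAverage f 0) (Ioo 0 R)) :
    Tendsto (fun r => r⁻¹ * ∫ z in norm ⁻¹' Ioo (r / 2) (2 * r), f z) (𝓝[>] 0) (𝓝 0) := by
  have hvol : Tendsto (fun r : ℝ => volume.restrict (Ioo 0 R) (Ioo (r / 2) (2 * r)))
      (𝓝[>] 0) (𝓝 0) := by
    have hlen : Tendsto (fun r : ℝ => ENNReal.ofReal (2 * r - r / 2)) (𝓝[>] 0) (𝓝 0) :=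
      tendsto_nhdsWithin_of_tendsto_nhds <|
        (ENNReal.continuous_ofReal.comp (by fun_prop)).tendsto' _ _ (by simp)
    exact tendsto_of_tendsto_of_tendsto_of_le_of_le tendsto_const_nhds hlen (fun _ => zero_le)
      fun r => (Measure.restrict_apply_le _ _).trans Real.volume_Ioo.le
  have hlim := (hint.tendsto_setIntegral_nhds_zero hvol).const_mul (4 * π)
  rw [mul_zero] at hlim
  refine tendsto_of_tendsto_of_tendsto_of_le_of_le' tendsto_const_nhds hlim ?_ ?_
  · filter_upwards [self_mem_nhdsWithin] with r hr
    exact mul_nonneg (inv_nonneg.2 (le_of_lt hr)) (integral_nonneg hf)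
  filter_upwards [Ioo_mem_nhdsGT (half_pos hR)] with r ⟨hr, hrR⟩
  have hsub : Ioo (r / 2) (2 * r) ⊆ Ioo 0 R := Ioo_subset_Ioo (half_pos hr).le (by linarith)
  have hfint : IntegrableOn f (norm ⁻¹' Ioo (r / 2) (2 * r)) :=
    integrableOn_norm_preimage_Ioo hcont (half_pos hr) (by linarith)
  have hM := hint.mono_set hsub
  calc
    _ = r⁻¹ * (2 * π * ∫ s in Ioo (r / 2) (2 * r), s * circleAverage f 0 s) := by
      rw [setIntegral_norm_preimage measurableSet_Ioo (hsub.trans Ioo_subset_Ioi_self) hfint]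
    _ ≤ r⁻¹ * (2 * π * ∫ s in Ioo (r / 2) (2 * r), 2 * r * circleAverage f 0 s) := by
      gcongr ?_ * (?_ * ?_)
      refine setIntegral_mono_on (integrableOn_mul_circleAverage measurableSet_Ioo
        (hsub.trans Ioo_subset_Ioi_self) hfint) (hM.const_mul _) measurableSet_Ioo fun s hs => ?_
      exact mul_le_mul_of_nonneg_right hs.2.le (circleAverage_nonneg_of_nonneg fun z _ => hf z)
    _ = 4 * π * ∫ s in Ioo (r / 2) (2 * r), circleAverage f 0 s := by
      rw [integral_const_mul]
      field_simp
      ring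
    _ = _ := by rw [Measure.restrict_restrict measurableSet_Ioo, inter_eq_left.2 hsub]

lemma tendsto_circleAverage_of_isLittleO {E : Type*} [NormedAddCommGroup E] [NormedSpace ℂ E]
    [CompleteSpace E] {f : ℂ → E} {c : ℂ} {R s : ℝ} (hf : DifferentiableOn ℂ f (ball c R \ {c}))
    (ho : f =o[𝓝[≠] c] fun z => (z - c)⁻¹) (hs : s ∈ Ioo 0 R) :
    Tendsto f (𝓝[≠] c) (𝓝 (circleAverage f c s)) := by
  have hU := isOpen_ball_diff_singleton c R
  have hconst : (fun _ => f c) =o[𝓝[≠] c] fun z => (z - c)⁻¹ := by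
    refine Asymptotics.isLittleO_const_left.2 (Or.inr ?_)
    simp only [Function.comp_def, norm_inv]
    exact tendsto_inv_nhdsGT_zero.comp (tendsto_norm_sub_self_nhdsNE c)
  have hlim := Complex.tendsto_limUnder_of_differentiable_on_punctured_nhds_of_isLittleO
    (mem_nhdsWithin.2 ⟨ball c R, isOpen_ball, mem_ball_self (hs.1.trans hs.2),
      fun z hz => hf.differentiableAt (hU.mem_nhds hz)⟩) (ho.sub hconst)
  have hsub : closedBall c s \ {c} ⊆ ball c R \ {c} :=
    sdiff_subset_sdiff_left (closedBall_subset_ball hs.2)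
  rwa [circleAverage_eq_circleIntegral hs.1.ne',
    Complex.circleIntegral_sub_center_inv_smul_of_differentiable_on_off_countable_of_tendsto hs.1
      countable_empty (hf.continuousOn.mono hsub) (fun z hz => hf.differentiableAt
        (hU.mem_nhds (hsub ⟨ball_subset_closedBall hz.1.1, hz.1.2⟩))) hlim, inv_smul_smul₀]
  exact Complex.two_pi_I_ne_zero

lemma closedBall_subset_norm_preimage_Ioo {E : Type*} [NormedAddCommGroup E] {z : E} {a r b : ℝ}
    (ha : a + r < ‖z‖) (hb : ‖z‖ + r < b) : closedBall z r ⊆ norm ⁻¹' Ioo a b := fun x hx => by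
  have hdist := mem_closedBall_iff_norm.1 hx
  constructor <;> linarith [norm_sub_norm_le x z, norm_sub_norm_le z x, norm_sub_rev z x]

lemma IsWeaklyHarmonicOn.exists_norm_complexEulerDeriv_weylRep_mul_norm_le :
    ∃ C, ∀ {w : ℂ → ℝ} {R : ℝ}, IsWeaklyHarmonicOn w (ball 0 R \ {0}) →
      LocallyIntegrableOn w (ball 0 R \ {0}) → ∀ {z : ℂ}, z ≠ 0 → 2 * ‖z‖ < R →
        ‖complexEulerDeriv (weylRep w) z‖ * ‖z‖ ≤
          C * (‖z‖⁻¹ * ∫ x in norm ⁻¹' Ioo (‖z‖ / 2) (2 * ‖z‖), |weylRep w x|) := by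
  obtain ⟨C, hC, hgrad⟩ := exists_norm_fderiv_weylRep_le
  refine ⟨128 * C, fun {w R} Hw hw z hz hzR => ?_⟩
  have hU := isOpen_ball_diff_singleton 0 R
  have hz0 : 0 < ‖z‖ := norm_pos_iff.2 hz
  have hpunct : norm ⁻¹' Ioo 0 R = ball (0 : ℂ) R \ {0} := norm_preimage_Ioo_zero R
  have hball : closedBall z (‖z‖ / 4) ⊆ norm ⁻¹' Ioo (‖z‖ / 2) (2 * ‖z‖) :=
    closedBall_subset_norm_preimage_Ioo (by linarith) (by linarith)
  have hannulus : norm ⁻¹' Ioo (‖z‖ / 2) (2 * ‖z‖) ⊆ ball (0 : ℂ) R \ {0} :=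
    hpunct ▸ preimage_mono (Ioo_subset_Ioo (by positivity) hzR.le)
  have hcont : ContinuousOn (fun x => |weylRep w x|) (ball 0 R \ {0}) := fun x hx =>
    ((Hw.harmonicOnNhd_weylRep hw hU) x hx).1.continuousAt.abs.continuousWithinAt
  calc
    _ ≤ 2 * ‖z‖ * (C * ((‖z‖ / 4) ^ 3)⁻¹ * ∫ x in closedBall z (‖z‖ / 4), |w x|) * ‖z‖ := by
      refine mul_le_mul_of_nonneg_right ((norm_complexEulerDeriv_le _ z).trans ?_) hz0.le
      gcongr
      refine hgrad Hw hw (by positivity) (hpunct ▸ ?_)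
      exact closedBall_subset_norm_preimage_Ioo (by linarith) (by linarith)
    _ = 128 * C * (‖z‖⁻¹ * ∫ x in closedBall z (‖z‖ / 4), |weylRep w x|) := by
      rw [setIntegral_congr_ae (g := fun x => |weylRep w x|) measurableSet_closedBall]
      · field_simp
        ring
      · filter_upwards [Hw.ae_eq_weylRep hw hU] with x hx hxz
        rw [hx (hannulus (hball hxz))]
    _ ≤ _ := by
      gcongr ?_ * (?_ * ?_)
      exact setIntegral_mono_set (integrableOn_norm_preimage_Ioo hcont (half_pos hz0) hzR)
        (.of_forall fun _ => abs_nonneg _) hball.eventuallyLE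

lemma IsWeaklyHarmonicOn.isLittleO_complexEulerDeriv_weylRep {w : ℂ → ℝ} {R : ℝ} (hR : 0 < R)
    (Hw : IsWeaklyHarmonicOn w (ball 0 R \ {0})) (hw : LocallyIntegrableOn w (ball 0 R \ {0}))
    (hint : IntegrableOn (circleAverage (fun z => |weylRep w z|) 0) (Ioo 0 R)) :
    complexEulerDeriv (weylRep w) =o[𝓝[≠] 0] fun z => (z - 0)⁻¹ := by
  have hcont : ContinuousOn (fun z => |weylRep w z|) (ball 0 R \ {0}) := fun z hz =>
    ((Hw.harmonicOnNhd_weylRep hw (isOpen_ball_diff_singleton 0 R)) z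
      hz).1.continuousAt.abs.continuousWithinAt
  obtain ⟨C, hC⟩ := exists_norm_complexEulerDeriv_weylRep_mul_norm_le
  have hmean := ((tendsto_inv_mul_setIntegral_norm_preimage hR hcont (fun _ => abs_nonneg _)
    hint).comp (tendsto_norm_nhdsNE_zero (E := ℂ))).const_mul C
  rw [mul_zero] at hmean
  refine Asymptotics.isLittleO_of_tendsto' ?_ (squeeze_zero_norm' ?_ hmean)
  · filter_upwards [self_mem_nhdsWithin] with z hz h
    exact absurd (by simpa using h) hz
  · filter_upwards [inter_mem_nhdsWithin _ (ball_mem_nhds 0 (half_pos hR))] with z ⟨hz, hzR⟩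
    rw [sub_zero, div_inv_eq_mul, norm_mul]
    exact hC Hw hw hz (by linarith [mem_ball_zero_iff.1 hzR])

theorem IsWeaklyHarmonicOn.exists_tendsto_eulerDeriv_weylRep {w : ℂ → ℝ} {R : ℝ} (hR : 0 < R)
    (Hw : IsWeaklyHarmonicOn w (ball 0 R \ {0})) (hw : LocallyIntegrableOn w (ball 0 R \ {0}))
    (hexp : IntegrableOn (fun z => Real.exp (2 * w z)) (ball 0 R)) :
    ∃ A, -1 < A ∧ Tendsto (eulerDeriv (weylRep w)) (𝓝[≠] 0) (𝓝 A) := by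
  have hU := isOpen_ball_diff_singleton 0 R
  have hharm := Hw.harmonicOnNhd_weylRep hw hU
  have hcont : ContinuousOn (weylRep w) (ball 0 R \ {0}) := fun z hz =>
    (hharm z hz).1.continuousAt.continuousWithinAt
  have hexp' : IntegrableOn (fun z => Real.exp (2 * weylRep w z)) (ball 0 R) := by
    refine hexp.congr_fun_ae ((ae_restrict_iff' measurableSet_ball).2 ?_)
    filter_upwards [Hw.ae_eq_weylRep hw hU, Measure.ae_ne volume 0] with z hz hz0 hzR
    rw [hz ⟨hzR, hz0⟩]
  obtain ⟨A, B, hAB⟩ := exists_circleAverage_eq_mul_log_add hharm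
  have hmean : ∀ s ∈ Ioo 0 R, circleAverage (weylRep w) 0 s = A * Real.log s + B :=
    fun s hs => (hAB s hs).2
  refine ⟨A, neg_one_lt_of_circleAverage_eq_mul_log_add hR hcont hmean hexp', ?_⟩
  have hs : R / 2 ∈ Ioo 0 R := ⟨half_pos hR, half_lt_self hR⟩
  have hlim := tendsto_circleAverage_of_isLittleO (differentiableOn_complexEulerDeriv hharm)
    (Hw.isLittleO_complexEulerDeriv_weylRep hR hw
      (integrableOn_circleAverage_abs hcont hmean hexp')) hs
  rw [← (hAB _ hs).1, circleAverage_eulerDeriv hharm hs]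
  simpa only [Function.comp_def, re_complexEulerDeriv] using
    (Complex.continuous_re.tendsto _).comp hlim

/-! ### The residue bound -/

@[fun_prop]
lemma measurable_eulerDeriv (u : ℂ → ℝ) : Measurable (eulerDeriv u) := by
  simp only [funext (eulerDeriv_eq_re_mul_add_im_mul u)]
  exact (Complex.measurable_re.mul (measurable_fderiv_apply_const ℝ u 1)).add
    (Complex.measurable_im.mul (measurable_fderiv_apply_const ℝ u Complex.I))

lemma ofReal_integral_le_lintegral_ofReal {α : Type*} [MeasurableSpace α] (μ : Measure α)
    (f : α → ℝ) : ENNReal.ofReal (∫ x, f x ∂μ) ≤ ∫⁻ x, ENNReal.ofReal (f x) ∂μ := by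
  by_cases hf : Integrable f μ
  · calc
      _ ≤ ENNReal.ofReal (∫ x, max (f x) 0 ∂μ) :=
        ENNReal.ofReal_le_ofReal <| integral_mono hf hf.pos_part fun x => le_max_left _ _
      _ = _ := by
        rw [ofReal_integral_eq_lintegral_ofReal hf.pos_part (.of_forall fun x => le_max_right _ _)]
        simp [ENNReal.ofReal_max]
  · simp [integral_undef hf]

lemma flux_eq_integral_Ioo (u : ℂ → ℝ) (s : ℝ) :
    flux u s = ∫ θ in Ioo (-π) π, eulerDeriv u (circleMap 0 s θ) := by
  have havg : flux u s = 2 * π * circleAverage (eulerDeriv u) 0 s := by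
    rw [circleAverage_def, smul_eq_mul, mul_inv_cancel_left₀ two_pi_pos.ne', flux]
    congr! 2 with θ
    rw [eulerDeriv, circleMap_zero, ← Complex.real_smul, map_smul, smul_eq_mul, mul_comm]
  rw [havg, circleAverage_eq_integral_Ioo, mul_inv_cancel_left₀ two_pi_pos.ne']

lemma ofReal_mul_volume_ball_le_setLIntegral {u : ℂ → ℝ} {c r : ℝ}
    (h : ∀ᵐ s, s ∈ Ioo 0 r → flux u s ≤ -(2 * π * c)) :
    ENNReal.ofReal c * volume (ball (0 : ℂ) r) ≤
      ∫⁻ z in ball 0 r, ENNReal.ofReal (-eulerDeriv u z) := by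
  have hpunct : norm ⁻¹' Ioo 0 r =ᵐ[volume] ball (0 : ℂ) r :=
    norm_preimage_Ioo_zero r ▸ sdiff_null_ae_eq_self (measure_singleton 0)
  rw [← setLIntegral_const, ← setLIntegral_congr hpunct, ← setLIntegral_congr hpunct,
    setLIntegral_norm_preimage measurable_const measurableSet_Ioo Ioo_subset_Ioi_self,
    setLIntegral_norm_preimage (by fun_prop) measurableSet_Ioo Ioo_subset_Ioi_self]
  refine lintegral_mono_ae ((ae_restrict_iff' measurableSet_Ioo).2 ?_)
  filter_upwards [h] with s hs hsr
  refine mul_le_mul_right ?_ _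
  calc
    _ = ENNReal.ofReal (2 * π * c) := by
      rw [setLIntegral_const, Real.volume_Ioo, ← ENNReal.ofReal_mul' (by linarith [pi_pos])]
      ring_nf
    _ ≤ ENNReal.ofReal (∫ θ in Ioo (-π) π, -eulerDeriv u (circleMap 0 s θ)) := by
      rw [integral_neg, ← flux_eq_integral_Ioo]
      exact ENNReal.ofReal_le_ofReal (le_neg_of_le_neg (hs hsr))
    _ ≤ _ := ofReal_integral_le_lintegral_ofReal _ _

lemma ofReal_le_ofReal_add_of_flux_le {u W : ℂ → ℝ} {ν : Measure ℂ} [IsFiniteMeasure ν]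
    {M R r c m : ℝ} (hν : ∀ᵐ y ∂ν, ‖y‖ ≤ M)
    (hW : ∀ z ∈ ball 0 R \ {0}, DifferentiableAt ℝ W z)
    (hu : ∀ᵐ z, z ∈ ball 0 R \ {0} → u z - logPot ν z = W z) (hr : r ∈ Ioo 0 (R / 2))
    (hflux : ∀ᵐ s, s ∈ Ioo 0 r → flux u s ≤ -(2 * π * c))
    (hm : ∀ z ∈ ball 0 r \ {0}, -eulerDeriv W z ≤ m) :
    ENNReal.ofReal c ≤
      ENNReal.ofReal m + ENNReal.ofReal (7 / π) * ∫⁻ y, ENNReal.ofReal (r / (r + ‖y‖)) ∂ν := by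
  have hvol : volume (ball (0 : ℂ) r) = ENNReal.ofReal (π * r ^ 2) :=
    volume_ball_eq_ofReal 0 hr.1.le
  rw [← ENNReal.mul_le_mul_iff_right (measure_ball_pos volume (0 : ℂ) hr.1).ne'
    measure_ball_lt_top.ne]
  calc
    _ ≤ ∫⁻ z in ball 0 r, ENNReal.ofReal (-eulerDeriv u z) := by
      rw [mul_comm]
      exact ofReal_mul_volume_ball_le_setLIntegral hflux
    _ ≤ ∫⁻ z in ball 0 r, (ENNReal.ofReal m + lowerRadialVariation ν z) := by
      refine lintegral_mono_ae ((ae_restrict_iff' measurableSet_ball).2 ?_)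
      filter_upwards [ae_ofReal_neg_eulerDeriv_le hW hu, Measure.ae_ne volume 0] with z hz hz0 hzr
      refine (hz ⟨ball_subset_ball hr.2.le hzr, hz0⟩).trans ?_
      gcongr
      exact hm z ⟨hzr, hz0⟩
    _ ≤ ENNReal.ofReal m * volume (ball (0 : ℂ) r) +
          ENNReal.ofReal (7 * r ^ 2) * ∫⁻ y, ENNReal.ofReal (r / (r + ‖y‖)) ∂ν := by
      rw [lintegral_add_left measurable_const, setLIntegral_const]
      gcongr
      exact setLIntegral_lowerRadialVariation_le hν hr.1
    _ = _ := by
      have hcancel : 7 * r ^ 2 = π * r ^ 2 * (7 / π) := by field_simp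
      rw [hvol, mul_add, mul_comm, hcancel,
        ENNReal.ofReal_mul (p := π * r ^ 2) (by positivity), mul_assoc (ENNReal.ofReal _)]

/- The minimum with `0` accounts for the points where `u` is not differentiable: there `fderiv`
is zero. -/
lemma min_zero_le_of_tendsto_flux {u W : ℂ → ℝ} {ν : Measure ℂ} [IsFiniteMeasure ν]
    {M R A lam : ℝ} {E : Set ℝ} (hR : 0 < R) (hν : ∀ᵐ y ∂ν, ‖y‖ ≤ M) (hν0 : ν {0} = 0)
    (hW : ∀ z ∈ ball 0 R \ {0}, DifferentiableAt ℝ W z)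
    (hu : ∀ᵐ z, z ∈ ball 0 R \ {0} → u z - logPot ν z = W z)
    (hA : Tendsto (eulerDeriv W) (𝓝[≠] 0) (𝓝 A)) (hE : volume (Ioo 0 R \ E) = 0)
    (hlam : Tendsto (flux u) (𝓝[E] 0) (𝓝 (2 * π * lam))) : min A 0 ≤ lam := by
  by_contra! hlt
  obtain ⟨m, hlm, hm⟩ := exists_between hlt
  obtain ⟨c, hlc, hcm⟩ := exists_between hlm
  have hm0 : 0 ≤ -m := by linarith [min_le_right A 0]
  have hflux : ∀ᶠ s in 𝓝[E] 0, flux u s ≤ -(2 * π * -c) := by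
    filter_upwards [hlam.eventually_lt_const
      (mul_lt_mul_of_pos_left hlc two_pi_pos)] with s hs using by linarith
  have hWm : ∀ᶠ z in 𝓝[≠] 0, -eulerDeriv W z ≤ -m := by
    filter_upwards [hA.eventually_const_lt (hm.trans_le (min_le_left A 0))] with z hz
      using neg_le_neg hz.le
  obtain ⟨ρ, hρ, hflux⟩ := Metric.mem_nhdsWithin_iff.1 hflux
  obtain ⟨ρ', hρ', hWm⟩ := Metric.mem_nhdsWithin_iff.1 hWm
  have hbound : ∀ᶠ r in 𝓝[>] 0, ENNReal.ofReal (-c) ≤ ENNReal.ofReal (-m) +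
      ENNReal.ofReal (7 / π) * ∫⁻ y, ENNReal.ofReal (r / (r + ‖y‖)) ∂ν := by
    filter_upwards [Ioo_mem_nhdsGT (half_pos hR), Ioo_mem_nhdsGT hρ, Ioo_mem_nhdsGT hρ']
      with r hr hrρ hrρ'
    refine ofReal_le_ofReal_add_of_flux_le hν hW hu hr ?_ fun z hz =>
      hWm ⟨ball_subset_ball hrρ'.2.le hz.1, hz.2⟩
    filter_upwards [measure_eq_zero_iff_ae_notMem.1 hE] with s hs hsr
    refine hflux ⟨?_, not_not.1 fun hsE => hs ⟨⟨hsr.1, by linarith [hsr.2, hr.2]⟩, hsE⟩⟩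
    rw [mem_ball_zero_iff, Real.norm_of_nonneg hsr.1.le]
    exact hsr.2.trans hrρ.2
  have hlim := (ENNReal.Tendsto.const_mul (a := ENNReal.ofReal (7 / π))
    (tendsto_lintegral_div_add_norm hν0) (.inr ENNReal.ofReal_ne_top)).const_add
    (ENNReal.ofReal (-m))
  have hle := ge_of_tendsto hlim hbound
  rw [mul_zero, add_zero, ENNReal.ofReal_le_ofReal_iff hm0] at hle
  linarith

lemma negPart_toJordanDecomposition_eq_zero {α : Type*} [MeasurableSpace α] {μ : SignedMeasure α}
    {S : Set α} (hS : MeasurableSet S) (htv : μ.totalVariation Sᶜ = 0)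
    (hpos : ∀ A, MeasurableSet A → A ⊆ S → 0 ≤ μ A) : μ.toJordanDecomposition.negPart = 0 := by
  rw [SignedMeasure.totalVariation, Measure.add_apply, add_eq_zero] at htv
  obtain ⟨P, hP, -, hN, -, hneg⟩ := μ.toJordanDecomposition_spec
  have hzero : μ (Pᶜ ∩ S) = 0 := le_antisymm
    (μ.nonpos_of_restrict_le_zero (μ.restrict_le_zero_subset hP.compl inter_subset_left hN))
    (hpos _ (hP.compl.inter hS) inter_subset_right)
  rw [← Measure.measure_univ_eq_zero, ← measure_add_measure_compl hS, htv.2, add_zero, hneg,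
    SignedMeasure.toMeasureOfLEZero_apply μ hN hP.compl hS]
  simp [hzero]

lemma isWeaklyHarmonicOn_sub_logPot {u : ℂ → ℝ} {Ω : Set ℂ} {ν : Measure ℂ} [IsFiniteMeasure ν]
    {M : ℝ} (hν : ∀ᵐ y ∂ν, ‖y‖ ≤ M) (hu : LocallyIntegrableOn u Ω)
    (hcurv : ∀ φ, IsTestOn φ Ω → -∫ x in Ω, u x * lap φ x = ∫ y, φ y ∂ν) :
    IsWeaklyHarmonicOn (fun z => u z - logPot ν z) Ω := fun h b p H hsub => by
  have hint : ∀ {w : ℂ → ℝ}, LocallyIntegrableOn w Ω →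
      Integrable fun x => w x * lap (radial h p) x := fun hw =>
    integrable_mul_of_forall_notMem_eq_zero (isCompact_closedBall p b)
      (hw.integrableOn_compact_subset hsub (isCompact_closedBall p b))
      (H.continuous_lap_radial p) fun _ => H.lap_radial_eq_zero
  have htest := hcurv _ (H.isTestOn_radial hsub)
  rw [setIntegral_eq_integral_of_forall_compl_eq_zero fun x hx => by
    rw [H.lap_radial_eq_zero (notMem_subset hsub hx), mul_zero]] at htest
  simp only [sub_mul]
  rw [integral_sub (hint hu) (hint ((locallyIntegrable_logPot hν).locallyIntegrableOn Ω)),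
    H.integral_logPot_mul_lap_radial hν p]
  linarith

lemma integrableOn_exp_sub_logPot {u : ℂ → ℝ} {R M : ℝ} {ν : Measure ℂ} [IsFiniteMeasure ν]
    (hν : ∀ᵐ y ∂ν, ‖y‖ ≤ M) (hu : IntegrableOn (fun z => Real.exp (2 * u z)) (ball 0 R)) :
    IntegrableOn (fun z => Real.exp (2 * (u z - logPot ν z))) (ball 0 R) := by
  set C := -(1 / (2 * π)) * (ν.real univ * log⁺ (R + M))
  have hmul : ∀ z, Real.exp (2 * (u z - logPot ν z)) =
      Real.exp (2 * u z) * Real.exp (-2 * logPot ν z) := fun z => by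
    rw [← Real.exp_add]
    ring_nf
  simp only [hmul]
  refine (hu.mul_const (Real.exp (-2 * C))).mono' ?_ ?_
  · have hmeas := measurable_logPot ν
    exact hu.aestronglyMeasurable.mul (by fun_prop)
  · refine (ae_restrict_iff' measurableSet_ball).2 (.of_forall fun z hz => ?_)
    have hlower : C ≤ logPot ν z := neg_mul_posLog_le_logPot hν (mem_ball_zero_iff.1 hz).le
    rw [Real.norm_of_nonneg (by positivity)]
    gcongr Real.exp _ * Real.exp ?_
    linarith

theorem strict_residue_bound_of_nonneg_curvature_general
    (u : ℂ → ℝ) (μ : SignedMeasure ℂ) (lam : ℝ) (E : Set ℝ)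
    (hcurv : HasCurv u (ball (0 : ℂ) 1 \ {0}) μ)
    (harea : IntegrableOn (fun z => Real.exp (2 * u z)) (ball (0 : ℂ) 1) volume)
    (hpos : ∀ A : Set ℂ, MeasurableSet A → A ⊆ ball (0 : ℂ) 1 \ {0} → 0 ≤ μ A)
    (hEfull : volume (Set.Ioo (0 : ℝ) 1 \ E) = 0)
    (hlam : Tendsto (flux u) (nhdsWithin 0 E) (𝓝 (2 * π * lam))) :
    -1 < lam := by
  obtain ⟨hu, htv, hcurv⟩ := hcurv
  have hU := isOpen_ball_diff_singleton 0 1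
  have hneg := negPart_toJordanDecomposition_eq_zero hU.measurableSet htv hpos
  set ν := μ.toJordanDecomposition.posPart
  have hνU : ν (ball 0 1 \ {0})ᶜ = 0 := by
    rw [SignedMeasure.totalVariation, Measure.add_apply, add_eq_zero] at htv
    exact htv.1
  have hν0 : ν {0} = 0 :=
    measure_mono_null (singleton_subset_iff.2 fun h0 => h0.2 rfl) hνU
  have hν : ∀ᵐ y ∂ν, ‖y‖ ≤ 1 := by
    filter_upwards [measure_eq_zero_iff_ae_notMem.1 hνU] with y hy
    exact (mem_ball_zero_iff.1 (notMem_compl_iff.1 hy).1).le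
  have Hw := isWeaklyHarmonicOn_sub_logPot hν hu fun φ hφ => by
    rw [hcurv φ hφ, sInt, hneg, integral_zero_measure, sub_zero]
  have hw := hu.sub ((locallyIntegrable_logPot hν).locallyIntegrableOn _)
  obtain ⟨A, hA, hlim⟩ := Hw.exists_tendsto_eulerDeriv_weylRep one_pos hw
    (integrableOn_exp_sub_logPot hν harea)
  have hdiff : ∀ z ∈ ball 0 1 \ {0}, DifferentiableAt ℝ (weylRep fun z => u z - logPot ν z) z :=
    fun z hz => (Hw.harmonicOnNhd_weylRep hw hU z hz).1.differentiableAt two_ne_zero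
  exact (lt_min hA neg_one_lt_zero).trans_le <| min_zero_le_of_tendsto_flux one_pos hν hν0 hdiff
    (Hw.ae_eq_weylRep hw hU) hlim hEfull hlam

/-- **Strict residue bound for nonnegative curvature (Lemma on residues, part 2).**
Let `g = e^{2u}g_euc ∈ 𝓜(D∖{0})` with `|𝕂_g|(D∖{0}) < π`, finite area
`∫_D e^{2u} < ∞`, and with the curvature measure `𝕂_g` nonnegative on `D∖{0}`.
Then `λ = lim_{a.e. r→0} (1/2π)∫_{∂D_r} ∂u/∂r` (which exists and satisfies `λ ≥ -1`)
satisfies the strict inequality `λ > -1`. -/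
theorem strict_residue_bound_of_nonneg_curvature
    (u : ℂ → ℝ) (μ : SignedMeasure ℂ) (lam : ℝ) (E : Set ℝ)
    (hcurv : HasCurv u (ball (0 : ℂ) 1 \ {0}) μ)
    (htv : μ.totalVariation (ball (0 : ℂ) 1 \ {0}) < ENNReal.ofReal π)
    (harea : IntegrableOn (fun z => Real.exp (2 * u z)) (ball (0 : ℂ) 1) volume)
    (hpos : ∀ A : Set ℂ, MeasurableSet A → A ⊆ ball (0 : ℂ) 1 \ {0} → 0 ≤ μ A)
    (hE : E ⊆ Set.Ioo 0 1) (hEfull : volume (Set.Ioo (0 : ℝ) 1 \ E) = 0)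
    (hlam : Tendsto (flux u) (nhdsWithin 0 E) (𝓝 (2 * π * lam))) :
    -1 < lam :=
  strict_residue_bound_of_nonneg_curvature_general u μ lam E hcurv harea hpos hEfull hlam
end
end

section
/- Let v be a harmonic function on the flat cylinder S¹ × (a,b) (with b - a > 1) such that ‖∇v‖_{L¹(S¹×[t,t+1])} ≤ Λ for a.e. t ∈ (a, b-1). Then: (i) sup_{S¹×[a+1/2, b-1/2]} |∇v| ≤ 4Λ/π; (ii) the circle average (1/2π)∫_{S¹×{t}} v dθ is an affine function A + Bt of t with |B| ≤ 4Λ/π; and (iii) |v(t,θ) - A - Bt| ≤ 4Λ for all (θ,t) ∈ S¹ × [a+1/2, b-1/2]. -/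
open MeasureTheory Filter Topology Set Real

noncomputable section

/-- The flat Laplacian on `ℝ² = ℝ × ℝ` (coordinates `(θ, t)`). -/
noncomputable def lap2 (v : ℝ × ℝ → ℝ) (p : ℝ × ℝ) : ℝ :=
  fderiv ℝ (fun q => fderiv ℝ v q (1, 0)) p (1, 0) +
    fderiv ℝ (fun q => fderiv ℝ v q (0, 1)) p (0, 1)

/-- The Euclidean length of the gradient of `v : ℝ × ℝ → ℝ`. -/
noncomputable def gradNorm2 (v : ℝ × ℝ → ℝ) (p : ℝ × ℝ) : ℝ :=
  Real.sqrt ((fderiv ℝ v p (1, 0)) ^ 2 + (fderiv ℝ v p (0, 1)) ^ 2)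

/-!
The complex derivative `∂_θ v - i ∂_t v` of a harmonic function is holomorphic and has modulus
`|∇v|`, so the area of a disk times `|∇v|` at its center is at most `∫ |∇v|` over the disk. At
distance at least `h / 2` from the two ends, disks of radius `r < h / 2` embed in a window
`S¹ × [t, t + h]` over which that integral is at most `Λ`; letting `r → h / 2` bounds the gradient.
The integral `∫ v dθ` is affine in `t`, since its second derivative `∫ v_tt dθ = -∫ v_θθ dθ`
vanishes by periodicity. The function `v (·, t)` attains its average at distance at most half a
circumference from any given point, so its deviation from the average is controlled by the gradient.
-/

section PolarCoordinates

open Metric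

variable {E : Type*} [NormedAddCommGroup E]

theorem continuousOn_comp_circleMap {f : ℂ → E} {c : ℂ} {R : ℝ}
    (hf : ContinuousOn f (closedBall c R)) :
    ContinuousOn (fun p : ℝ × ℝ => f (circleMap c p.1 p.2)) (Icc 0 R ×ˢ univ) :=
  hf.comp (by fun_prop) fun p hp =>
    closedBall_subset_closedBall hp.1.2 (circleMap_mem_closedBall c hp.1.1 p.2)

theorem circleAverage_eq_setIntegral_Ioo [NormedSpace ℝ E] (f : ℂ → E) (c : ℂ) (r : ℝ) :
    circleAverage f c r = (2 * π)⁻¹ • ∫ φ in Ioo (-π) π, f (circleMap c r φ) := by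
  have hper : Function.Periodic (fun φ => f (circleMap c r φ)) (2 * π) :=
    (periodic_circleMap c r).comp f
  have hshift := hper.intervalIntegral_add_eq 0 (-π)
  rw [zero_add, show -π + 2 * π = π by ring] at hshift
  rw [circleAverage_def, hshift, intervalIntegral.integral_of_le (by linarith [pi_pos]),
    integral_Ioc_eq_integral_Ioo]

theorem norm_circleAverage_le_circleAverage_norm [NormedSpace ℝ E] (f : ℂ → E) (c : ℂ) (r : ℝ) :
    ‖circleAverage f c r‖ ≤ circleAverage (fun z => ‖f z‖) c r := by
  rw [circleAverage_def, circleAverage_def, norm_smul, norm_of_nonneg (by positivity), smul_eq_mul]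
  gcongr
  exact intervalIntegral.norm_integral_le_integral_norm two_pi_pos.le

theorem setIntegral_ball_eq_setIntegral_polar [NormedSpace ℝ E] (f : ℂ → E) (c : ℂ) (R : ℝ) :
    ∫ z in ball c R, f z =
      ∫ p in Ioo 0 R ×ˢ Ioo (-π) π, p.1 • f (circleMap c p.1 p.2) := by
  have htarget : Ioo 0 R ×ˢ Ioo (-π) π = polarCoord.target ∩ Ioo 0 R ×ˢ Ioo (-π) π :=
    (inter_eq_self_of_subset_right (prod_mono Ioo_subset_Ioi_self subset_rfl)).symm
  rw [← integral_indicator measurableSet_ball, ← integral_add_left_eq_self _ c,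
    ← Complex.integral_comp_polarCoord_symm, htarget,
    ← setIntegral_indicator (measurableSet_Ioo.prod measurableSet_Ioo)]
  refine setIntegral_congr_fun polarCoord.open_target.measurableSet ?_
  rintro ⟨r, φ⟩ ⟨hr, hφ⟩
  have hcircle : c + Complex.polarCoord.symm (r, φ) = circleMap c r φ := by
    simp [circleMap, Complex.exp_mul_I]
  have hmem : circleMap c r φ ∈ ball c R ↔ (r, φ) ∈ Ioo 0 R ×ˢ Ioo (-π) π := by
    simp_all [abs_of_pos, circleMap]
  simp only [hcircle, indicator, hmem, smul_ite, smul_zero]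

theorem setIntegral_ball_eq_integral_circleAverage [NormedSpace ℝ E] {f : ℂ → E} {c : ℂ} {R : ℝ}
    (hR : 0 ≤ R) (hf : ContinuousOn f (closedBall c R)) :
    ∫ z in ball c R, f z = ∫ r in 0..R, (2 * π * r) • circleAverage f c r := by
  have hint : IntegrableOn (fun p : ℝ × ℝ => p.1 • f (circleMap c p.1 p.2))
      (Ioo 0 R ×ˢ Ioo (-π) π) :=
    ((continuousOn_fst.smul (continuousOn_comp_circleMap hf)).mono
      (prod_mono subset_rfl (subset_univ _))).integrableOn_compact
      (isCompact_Icc.prod (isCompact_Icc (a := -π) (b := π))) |>.mono_set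
      (prod_mono Ioo_subset_Icc_self Ioo_subset_Icc_self)
  rw [setIntegral_ball_eq_setIntegral_polar, Measure.volume_eq_prod, setIntegral_prod _ hint,
    intervalIntegral.integral_of_le hR, integral_Ioc_eq_integral_Ioo]
  refine setIntegral_congr_fun measurableSet_Ioo fun r _ => ?_
  simp only [circleAverage_eq_setIntegral_Ioo, integral_smul, smul_smul]
  congr 1
  field_simp

end PolarCoordinates

section DiskMeanValue

open Metric

variable {E : Type*} [NormedAddCommGroup E] [NormedSpace ℂ E] [CompleteSpace E]

theorem norm_le_circleAverage_norm {F : ℂ → E} {c : ℂ} {r : ℝ}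
    (hF : DiffContOnCl ℂ F (ball c |r|)) :
    ‖F c‖ ≤ circleAverage (fun z => ‖F z‖) c r := by
  simpa only [hF.circleAverage] using norm_circleAverage_le_circleAverage_norm F c r

theorem area_mul_norm_le_setIntegral_ball {F : ℂ → E} {c : ℂ} {R : ℝ} (hR : 0 ≤ R)
    (hF : DiffContOnCl ℂ F (ball c R)) :
    π * R ^ 2 * ‖F c‖ ≤ ∫ z in ball c R, ‖F z‖ := by
  have hcont := hF.continuousOn_ball.norm
  have hcircle : ContinuousOn (circleAverage (fun z => ‖F z‖) c) (Icc 0 R) :=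
    ContinuousOn.circleAverage (hcont.mono fun z hz => by simpa [dist_eq_norm] using hz.2)
      fun r hr => hr.1
  calc π * R ^ 2 * ‖F c‖ = ∫ r in 0..R, 2 * π * r * ‖F c‖ := by
        rw [intervalIntegral.integral_mul_const, intervalIntegral.integral_const_mul, integral_id]
        ring
    _ ≤ ∫ r in 0..R, 2 * π * r * circleAverage (fun z => ‖F z‖) c r := by
        refine intervalIntegral.integral_mono_on hR
          (ContinuousOn.intervalIntegrable_of_Icc hR (by fun_prop))
          (ContinuousOn.intervalIntegrable_of_Icc hR (by fun_prop)) fun r hr => ?_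
        have hr₀ : 0 ≤ r := hr.1
        gcongr
        refine norm_le_circleAverage_norm (hF.mono (ball_subset_ball ?_))
        exact (abs_of_nonneg hr₀).trans_le hr.2
    _ = ∫ z in ball c R, ‖F z‖ :=
        (setIntegral_ball_eq_integral_circleAverage hR hcont).symm

end DiskMeanValue

section PeriodicFunctions

variable {E F : Type*} [NormedAddCommGroup E] [NormedSpace ℝ E]
  [NormedAddCommGroup F] [NormedSpace ℝ F]

theorem periodic_fderiv {f : E → F} {c : E} (hf : Function.Periodic f c) :
    Function.Periodic (fderiv ℝ f) c := fun x => by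
  rw [← fderiv_comp_add_right, hf.funext]

theorem setIntegral_Ico_prod_eq_of_periodic {β : Type*} [MeasurableSpace β] {μ : Measure β}
    [SFinite μ] {g : ℝ × β → E} {T : ℝ} (hT : 0 ≤ T)
    (hg : ∀ y, Function.Periodic (fun x => g (x, y)) T) {K : Set β}
    (hint : ∀ s, IntegrableOn g (Ico s (s + T) ×ˢ K) (volume.prod μ)) (s s' : ℝ) :
    ∫ p in Ico s (s + T) ×ˢ K, g p ∂volume.prod μ =
      ∫ p in Ico s' (s' + T) ×ˢ K, g p ∂volume.prod μ := by
  have hfubini : ∀ s, ∫ p in Ico s (s + T) ×ˢ K, g p ∂volume.prod μ =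
      ∫ y in K, (∫ x in s..(s + T), g (x, y)) ∂μ := by
    intro s
    specialize hint s
    rw [IntegrableOn, ← Measure.prod_restrict] at hint
    simp only [← Measure.prod_restrict, integral_prod_symm _ hint,
      intervalIntegral.integral_of_le (le_add_of_nonneg_right hT), integral_Ico_eq_integral_Ioc]
  simp only [hfubini, fun y => (hg y).intervalIntegral_add_eq s s']

theorem abs_sub_interval_average_le_of_periodic {f f' : ℝ → ℝ} {T K : ℝ} (hT : 0 < T)
    (hper : Function.Periodic f T) (hf : ∀ x, HasDerivAt f (f' x) x) (hK : ∀ x, |f' x| ≤ K)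
    (x : ℝ) : |f x - ⨍ y in 0..T, f y| ≤ K * (T / 2) := by
  have hlt : x - T / 2 < x - T / 2 + T := lt_add_of_pos_right _ hT
  have hcont : Continuous f := continuous_iff_continuousAt.2 fun y => (hf y).continuousAt
  obtain ⟨y, hy, hfy⟩ := exists_eq_interval_average hlt.ne hcont.continuousOn
  have hshift : ⨍ y in 0..T, f y = f y := by
    rw [hfy, interval_average_eq, interval_average_eq, hper.intervalIntegral_add_eq _ 0]
    simp
  rw [uIoo_of_lt hlt] at hy
  have hxy : ‖x - y‖ ≤ T / 2 := abs_le.2 ⟨by linarith [hy.2], by linarith [hy.1]⟩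
  calc |f x - ⨍ y in 0..T, f y| = ‖f x - f y‖ := by rw [hshift, norm_eq_abs]
    _ ≤ K * ‖x - y‖ := convex_univ.norm_image_sub_le_of_norm_hasDerivWithin_le
        (fun z _ => (hf z).hasDerivWithinAt) (fun z _ => hK z) (mem_univ y) (mem_univ x)
    _ ≤ K * (T / 2) := mul_le_mul_of_nonneg_left hxy ((abs_nonneg _).trans (hK x))

end PeriodicFunctions

section AffineFunctions

variable {E : Type*} [NormedAddCommGroup E] [NormedSpace ℝ E]

theorem eq_add_smul_of_hasDerivAt_of_hasDerivAt_zero {f f' : ℝ → E} {s : Set ℝ} (hs : IsOpen s)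
    (hs' : IsPreconnected s) (hf : ∀ t ∈ s, HasDerivAt f (f' t) t)
    (hf' : ∀ t ∈ s, HasDerivAt f' 0 t) {t₀ t : ℝ} (ht₀ : t₀ ∈ s) (ht : t ∈ s) :
    f t = f t₀ + (t - t₀) • f' t₀ := by
  have hconst : ∀ t ∈ s, f' t = f' t₀ := fun t ht =>
    hs.is_const_of_deriv_eq_zero hs'
      (fun u hu => (hf' u hu).differentiableAt.differentiableWithinAt)
      (fun u hu => (hf' u hu).deriv) ht ht₀
  have hderiv : ∀ u, HasDerivAt (fun u => f t₀ + (u - t₀) • f' t₀) (f' t₀) u := fun u => by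
    simpa using (((hasDerivAt_id u).sub_const t₀).smul_const (f' t₀)).const_add (f t₀)
  refine hs.eqOn_of_deriv_eq hs' (fun u hu => (hf u hu).differentiableAt.differentiableWithinAt)
    (fun u _ => (hderiv u).differentiableAt.differentiableWithinAt) (fun u hu => ?_) ht₀
    (by simp) ht
  rw [(hf u hu).deriv, (hderiv u).deriv, hconst u hu]

end AffineFunctions

section Slices

theorem continuous_slice_fst {X : Type*} [TopologicalSpace X] {g : ℝ × ℝ → X} {s : Set ℝ}
    (hg : ContinuousOn g (univ ×ˢ s)) {t : ℝ} (ht : t ∈ s) :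
    Continuous fun x => g (x, t) :=
  hg.comp_continuous (by fun_prop) fun _ => ⟨mem_univ _, ht⟩

variable {E : Type*} [NormedAddCommGroup E] [NormedSpace ℝ E]

theorem hasDerivAt_slice_fst {g : ℝ × ℝ → E} {x t : ℝ} (hg : DifferentiableAt ℝ g (x, t)) :
    HasDerivAt (fun y => g (y, t)) (fderiv ℝ g (x, t) (1, 0)) x :=
  hg.hasFDerivAt.comp_hasDerivAt x ((hasDerivAt_id x).prodMk (hasDerivAt_const x t))

theorem hasDerivAt_slice_snd {g : ℝ × ℝ → E} {x t : ℝ} (hg : DifferentiableAt ℝ g (x, t)) :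
    HasDerivAt (fun u => g (x, u)) (fderiv ℝ g (x, t) (0, 1)) t :=
  hg.hasFDerivAt.comp_hasDerivAt t ((hasDerivAt_const t x).prodMk (hasDerivAt_id t))

variable {s : Set ℝ} {g : ℝ × ℝ → E}

theorem differentiableAt_of_contDiffOn_univ_prod (hs : IsOpen s)
    (hg : ContDiffOn ℝ 1 g (univ ×ˢ s)) {t : ℝ} (ht : t ∈ s) (x : ℝ) :
    DifferentiableAt ℝ g (x, t) :=
  (hg.contDiffAt ((isOpen_univ.prod hs).mem_nhds ⟨mem_univ _, ht⟩)).differentiableAt one_ne_zero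

theorem continuousOn_fderiv_apply (hs : IsOpen s) (hg : ContDiffOn ℝ 1 g (univ ×ˢ s))
    (w : ℝ × ℝ) : ContinuousOn (fun p => fderiv ℝ g p w) (univ ×ˢ s) :=
  (hg.continuousOn_fderiv_of_isOpen (isOpen_univ.prod hs) le_rfl).clm_apply continuousOn_const

theorem hasDerivAt_intervalIntegral_slice_fst (hs : IsOpen s)
    (hg : ContDiffOn ℝ 1 g (univ ×ˢ s)) {t : ℝ} (ht : t ∈ s) (c d : ℝ) :
    HasDerivAt (fun u => ∫ x in c..d, g (x, u)) (∫ x in c..d, fderiv ℝ g (x, t) (0, 1)) t := by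
  have hcont := continuousOn_fderiv_apply hs hg (0, 1)
  obtain ⟨ε, hε, hsub⟩ := Metric.nhds_basis_closedBall.mem_iff.1 (hs.mem_nhds ht)
  obtain ⟨C, hC⟩ := ((isCompact_uIcc (a := c) (b := d)).prod
    (isCompact_closedBall t ε)).exists_bound_of_continuousOn
    (hcont.mono (prod_mono (subset_univ _) hsub))
  refine (intervalIntegral.hasDerivAt_integral_of_dominated_loc_of_deriv_le
    (F' := fun u x => fderiv ℝ g (x, u) (0, 1)) (bound := fun _ => C)
    (Metric.closedBall_mem_nhds t hε) ?_ ?_ ?_ ?_ intervalIntegrable_const ?_).2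
  · filter_upwards [hs.mem_nhds ht] with u hu
    exact (continuous_slice_fst hg.continuousOn hu).aestronglyMeasurable
  · exact (continuous_slice_fst hg.continuousOn ht).intervalIntegrable _ _
  · exact (continuous_slice_fst hcont ht).aestronglyMeasurable
  · exact Eventually.of_forall fun x hx u hu => hC (x, u) ⟨uIoc_subset_uIcc hx, hu⟩
  · exact Eventually.of_forall fun x _ u hu =>
      hasDerivAt_slice_snd (differentiableAt_of_contDiffOn_univ_prod hs hg (hsub hu) x)

theorem intervalIntegral_fderiv_fst_eq_zero_of_periodic [CompleteSpace E] (hs : IsOpen s)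
    (hg : ContDiffOn ℝ 1 g (univ ×ˢ s)) {T : ℝ} (hper : Function.Periodic g (T, 0)) {t : ℝ}
    (ht : t ∈ s) : ∫ x in 0..T, fderiv ℝ g (x, t) (1, 0) = 0 := by
  rw [intervalIntegral.integral_eq_sub_of_hasDerivAt
    (fun x _ => hasDerivAt_slice_fst (differentiableAt_of_contDiffOn_univ_prod hs hg ht x))
    ((continuous_slice_fst (continuousOn_fderiv_apply hs hg (1, 0)) ht).intervalIntegrable _ _),
    sub_eq_zero]
  simpa using hper (0, t)

end Slices

section HarmonicOnPlane

open Metric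
open Complex (I equivRealProdCLM)

variable {v : ℝ × ℝ → ℝ} {U : Set (ℝ × ℝ)}

theorem fderiv_comp_equivRealProdCLM_apply (v : ℝ × ℝ → ℝ) (z w : ℂ) :
    fderiv ℝ (v ∘ equivRealProdCLM) z w = fderiv ℝ v (equivRealProdCLM z) (equivRealProdCLM w) := by
  rw [equivRealProdCLM.comp_right_fderiv]
  rfl

theorem fderiv_fderiv_comp_equivRealProdCLM {z : ℂ}
    (hv : ContDiffAt ℝ 2 v (equivRealProdCLM z)) (w : ℂ) :
    fderiv ℝ (fderiv ℝ (v ∘ equivRealProdCLM)) z w w =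
      fderiv ℝ (fun q => fderiv ℝ v q (equivRealProdCLM w)) (equivRealProdCLM z)
        (equivRealProdCLM w) := by
  have hdiff : DifferentiableAt ℝ (fderiv ℝ (v ∘ equivRealProdCLM)) z :=
    ((hv.comp z equivRealProdCLM.contDiff.contDiffAt).fderiv_right (m := 1) le_rfl
      ).differentiableAt one_ne_zero
  rw [← fderiv_comp_equivRealProdCLM_apply (fun q => fderiv ℝ v q (equivRealProdCLM w)) z w]
  have hcomp : (fun q => fderiv ℝ v q (equivRealProdCLM w)) ∘ equivRealProdCLM =
      fun z => fderiv ℝ (v ∘ equivRealProdCLM) z w :=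
    funext fun z => (fderiv_comp_equivRealProdCLM_apply v z w).symm
  rw [hcomp, fderiv_clm_apply hdiff (differentiableAt_const w)]
  simp

theorem laplacian_comp_equivRealProdCLM {z : ℂ} (hv : ContDiffAt ℝ 2 v (equivRealProdCLM z)) :
    Laplacian.laplacian (v ∘ equivRealProdCLM) z = lap2 v (equivRealProdCLM z) := by
  rw [InnerProductSpace.laplacian_eq_iteratedFDeriv_complexPlane, lap2]
  simp only [iteratedFDeriv_two_apply, Matrix.cons_val_zero, Matrix.cons_val_one,
    fderiv_fderiv_comp_equivRealProdCLM hv]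
  rfl

theorem harmonicAt_comp_equivRealProdCLM (hU : IsOpen U) (hv : ContDiffOn ℝ 2 v U)
    (hharm : ∀ p ∈ U, lap2 v p = 0) {z : ℂ} (hz : equivRealProdCLM z ∈ U) :
    InnerProductSpace.HarmonicAt (v ∘ equivRealProdCLM) z := by
  refine ⟨(hv.contDiffAt (hU.mem_nhds hz)).comp z equivRealProdCLM.contDiff.contDiffAt, ?_⟩
  filter_upwards [(hU.preimage equivRealProdCLM.continuous).mem_nhds hz] with w hw
  rw [laplacian_comp_equivRealProdCLM (hv.contDiffAt (hU.mem_nhds hw)), hharm _ hw, Pi.zero_apply]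

theorem norm_complexPartial_eq_gradNorm2 (v : ℝ × ℝ → ℝ) (z : ℂ) :
    ‖(fderiv ℝ (v ∘ equivRealProdCLM) z 1 - I * fderiv ℝ (v ∘ equivRealProdCLM) z I : ℂ)‖ =
      gradNorm2 v (equivRealProdCLM z) := by
  simp only [fderiv_comp_equivRealProdCLM_apply]
  rw [Complex.norm_def, Complex.normSq_apply, gradNorm2]
  simp [sq]

theorem gradNorm2_nonneg (v : ℝ × ℝ → ℝ) (p : ℝ × ℝ) : 0 ≤ gradNorm2 v p :=
  sqrt_nonneg _

theorem abs_fderiv_fst_le_gradNorm2 (v : ℝ × ℝ → ℝ) (p : ℝ × ℝ) :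
    |fderiv ℝ v p (1, 0)| ≤ gradNorm2 v p :=
  abs_le_sqrt (le_add_of_nonneg_right (sq_nonneg _))

theorem abs_fderiv_snd_le_gradNorm2 (v : ℝ × ℝ → ℝ) (p : ℝ × ℝ) :
    |fderiv ℝ v p (0, 1)| ≤ gradNorm2 v p :=
  abs_le_sqrt (le_add_of_nonneg_left (sq_nonneg _))

theorem continuousOn_gradNorm2 (hU : IsOpen U) (hv : ContDiffOn ℝ 1 v U) :
    ContinuousOn (gradNorm2 v) U := by
  have hfderiv := hv.continuousOn_fderiv_of_isOpen hU le_rfl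
  unfold gradNorm2
  fun_prop

-- A `closedBall` of `ℝ × ℝ` is a square; the mean value property is applied on its inscribed disk.
theorem area_mul_gradNorm2_le_setIntegral_closedBall (hU : IsOpen U) (hv : ContDiffOn ℝ 2 v U)
    (hharm : ∀ p ∈ U, lap2 v p = 0) {p : ℝ × ℝ} {r : ℝ} (hr : 0 ≤ r)
    (hball : closedBall p r ⊆ U) :
    π * r ^ 2 * gradNorm2 v p ≤ ∫ q in closedBall p r, gradNorm2 v q := by
  obtain ⟨c, rfl⟩ := equivRealProdCLM.surjective p
  have hdisk : closedBall c r ⊆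
      equivRealProdCLM ⁻¹' closedBall (equivRealProdCLM c) r := by
    intro z hz
    rw [mem_closedBall_iff_norm] at hz
    rw [mem_preimage, mem_closedBall_iff_norm, ← map_sub]
    exact (max_le (Complex.abs_re_le_norm _) (Complex.abs_im_le_norm _)).trans hz
  have hholo : DifferentiableOn ℂ (fun z =>
      (fderiv ℝ (v ∘ equivRealProdCLM) z 1 - I * fderiv ℝ (v ∘ equivRealProdCLM) z I : ℂ))
      (closedBall c r) := fun z hz =>
    (HarmonicAt.differentiableAt_complex_partial
      (harmonicAt_comp_equivRealProdCLM hU hv hharm (hball (hdisk hz)))).differentiableWithinAt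
  have hint : IntegrableOn (gradNorm2 v) (closedBall (equivRealProdCLM c) r) :=
    ((continuousOn_gradNorm2 hU (hv.of_le one_le_two)).mono hball).integrableOn_compact
      (isCompact_closedBall _ _)
  have hpreserve := Complex.volume_preserving_equiv_real_prod
  have hemb := Complex.measurableEquivRealProd.measurableEmbedding
  calc π * r ^ 2 * gradNorm2 v (equivRealProdCLM c)
      ≤ ∫ z in ball c r, gradNorm2 v (equivRealProdCLM z) := by
        simpa only [norm_complexPartial_eq_gradNorm2] using
          area_mul_norm_le_setIntegral_ball hr (hholo.diffContOnCl_ball subset_rfl)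
    _ ≤ ∫ z in equivRealProdCLM ⁻¹' closedBall (equivRealProdCLM c) r,
          gradNorm2 v (equivRealProdCLM z) :=
        setIntegral_mono_set ((hpreserve.integrableOn_comp_preimage hemb).2 hint)
          (Eventually.of_forall fun z => gradNorm2_nonneg v _)
          (ball_subset_closedBall.trans hdisk).eventuallyLE
    _ = ∫ q in closedBall (equivRealProdCLM c) r, gradNorm2 v q :=
        hpreserve.setIntegral_preimage_emb hemb _ _

end HarmonicOnPlane

section StripGradient

variable {v : ℝ × ℝ → ℝ} {s : Set ℝ} {t T K : ℝ}

theorem abs_interval_average_fderiv_snd_le (hs : IsOpen s) (hv : ContDiffOn ℝ 1 v (univ ×ˢ s))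
    (ht : t ∈ s) (hT : T ≠ 0) (hK : ∀ x, gradNorm2 v (x, t) ≤ K) :
    |⨍ x in 0..T, fderiv ℝ v (x, t) (0, 1)| ≤ K := by
  obtain ⟨x, -, hx⟩ := exists_eq_interval_average hT.symm
    (continuous_slice_fst (continuousOn_fderiv_apply hs hv (0, 1)) ht).continuousOn
  rw [← hx]
  exact (abs_fderiv_snd_le_gradNorm2 v (x, t)).trans (hK x)

theorem abs_sub_interval_average_slice_fst_le (hs : IsOpen s)
    (hv : ContDiffOn ℝ 1 v (univ ×ˢ s)) (ht : t ∈ s) (hT : 0 < T)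
    (hper : Function.Periodic v (T, 0)) (hK : ∀ x, gradNorm2 v (x, t) ≤ K) (x : ℝ) :
    |v (x, t) - ⨍ y in 0..T, v (y, t)| ≤ K * (T / 2) :=
  abs_sub_interval_average_le_of_periodic (f := fun y => v (y, t)) hT
    (fun y => by simpa using hper (y, t))
    (fun y => hasDerivAt_slice_fst (differentiableAt_of_contDiffOn_univ_prod hs hv ht y))
    (fun y => (abs_fderiv_fst_le_gradNorm2 v (y, t)).trans (hK y)) x

end StripGradient

section HarmonicOnStrip

variable {v : ℝ × ℝ → ℝ} {s : Set ℝ} {T : ℝ}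

theorem intervalIntegral_fderiv_fderiv_snd_eq_zero (hs : IsOpen s)
    (hv : ContDiffOn ℝ 2 v (univ ×ˢ s)) (hharm : ∀ p ∈ univ ×ˢ s, lap2 v p = 0)
    (hper : Function.Periodic v (T, 0)) {t : ℝ} (ht : t ∈ s) :
    ∫ x in 0..T, fderiv ℝ (fun q => fderiv ℝ v q (0, 1)) (x, t) (0, 1) = 0 := by
  have hfst : ContDiffOn ℝ 1 (fun q => fderiv ℝ v q (1, 0)) (univ ×ˢ s) :=
    (hv.fderiv_of_isOpen (isOpen_univ.prod hs) (by norm_num)).clm_apply contDiffOn_const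
  have hlap : ∀ x, fderiv ℝ (fun q => fderiv ℝ v q (0, 1)) (x, t) (0, 1) =
      -fderiv ℝ (fun q => fderiv ℝ v q (1, 0)) (x, t) (1, 0) := fun x =>
    eq_neg_of_add_eq_zero_right (hharm (x, t) ⟨mem_univ x, ht⟩)
  simp only [hlap, intervalIntegral.integral_neg, neg_eq_zero]
  exact intervalIntegral_fderiv_fst_eq_zero_of_periodic hs hfst
    ((periodic_fderiv hper).comp fun L => L (1, 0)) ht

theorem interval_average_slice_fst_eq_add_mul (hs : IsOpen s) (hs' : IsPreconnected s)
    (hv : ContDiffOn ℝ 2 v (univ ×ˢ s)) (hharm : ∀ p ∈ univ ×ˢ s, lap2 v p = 0)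
    (hper : Function.Periodic v (T, 0)) {t₀ t : ℝ} (ht₀ : t₀ ∈ s) (ht : t ∈ s) :
    ⨍ x in 0..T, v (x, t) =
      (⨍ x in 0..T, v (x, t₀)) + (t - t₀) * ⨍ x in 0..T, fderiv ℝ v (x, t₀) (0, 1) := by
  have hsnd : ContDiffOn ℝ 1 (fun q => fderiv ℝ v q (0, 1)) (univ ×ˢ s) :=
    (hv.fderiv_of_isOpen (isOpen_univ.prod hs) (by norm_num)).clm_apply contDiffOn_const
  have hderiv : ∀ u ∈ s, HasDerivAt (fun u => ∫ x in 0..T, fderiv ℝ v (x, u) (0, 1)) 0 u :=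
    fun u hu => by
      simpa only [intervalIntegral_fderiv_fderiv_snd_eq_zero hs hv hharm hper hu] using
        hasDerivAt_intervalIntegral_slice_fst hs hsnd hu 0 T
  have haffine := eq_add_smul_of_hasDerivAt_of_hasDerivAt_zero hs hs'
    (fun u hu => hasDerivAt_intervalIntegral_slice_fst hs (hv.of_le one_le_two) hu 0 T)
    hderiv ht₀ ht
  simp only [interval_average_eq, haffine, smul_eq_mul]
  ring

end HarmonicOnStrip

section GradientEstimate

open Metric

variable {v : ℝ × ℝ → ℝ} {a b h T Λ : ℝ} {p : ℝ × ℝ}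

theorem setIntegral_closedBall_gradNorm2_le (hv : ContDiffOn ℝ 1 v (univ ×ˢ Ioo a b))
    (hper : Function.Periodic v (T, 0)) {t r : ℝ} (hr : 0 < r) (hrT : 2 * r < T)
    (ht : a < t) (hth : t + h < b) (hpt : t ≤ p.2 - r) (hpth : p.2 + r ≤ t + h) :
    ∫ q in closedBall p r, gradNorm2 v q ≤
      ∫ q in Ico 0 T ×ˢ Icc t (t + h), gradNorm2 v q := by
  have hint : ∀ x, IntegrableOn (gradNorm2 v) (Ico x (x + T) ×ˢ Icc t (t + h)) := fun x =>
    ((continuousOn_gradNorm2 (isOpen_univ.prod isOpen_Ioo) hv).mono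
      (prod_mono (subset_univ _) (Icc_subset_Ioo ht hth))).integrableOn_compact
      (isCompact_Icc.prod isCompact_Icc) |>.mono_set (prod_mono Ico_subset_Icc_self subset_rfl)
  have hgrad : Function.Periodic (gradNorm2 v) (T, 0) :=
    (periodic_fderiv hper).comp fun L => √(L (1, 0) ^ 2 + L (0, 1) ^ 2)
  have hshift := setIntegral_Ico_prod_eq_of_periodic (μ := volume) (by linarith)
    (fun y x => by simpa using hgrad (x, y)) hint 0 (p.1 - r)
  rw [zero_add] at hshift
  refine (setIntegral_mono_set (hint (p.1 - r)) (Eventually.of_forall (gradNorm2_nonneg v))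
    (LE.le.eventuallyLE ?_)).trans_eq hshift.symm
  rw [← closedBall_prod_same, Real.closedBall_eq_Icc, Real.closedBall_eq_Icc]
  exact prod_mono (Icc_subset_Ico_right (by linarith)) (Icc_subset_Icc hpt hpth)

theorem area_mul_gradNorm2_le_of_lt (hab : h < b - a) (hhT : h ≤ T)
    (hv : ContDiffOn ℝ 2 v (univ ×ˢ Ioo a b)) (hharm : ∀ p ∈ univ ×ˢ Ioo a b, lap2 v p = 0)
    (hper : Function.Periodic v (T, 0))
    (hgrad : ∀ᵐ t ∂volume.restrict (Ioo a (b - h)),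
      ∫ p in Ico 0 T ×ˢ Icc t (t + h), gradNorm2 v p ≤ Λ)
    (hp : p.2 ∈ Icc (a + h / 2) (b - h / 2)) {r : ℝ} (hr : 0 < r) (hrh : r < h / 2) :
    π * r ^ 2 * gradNorm2 v p ≤ Λ := by
  obtain ⟨hpa, hpb⟩ := hp
  rw [ae_restrict_iff' measurableSet_Ioo] at hgrad
  have hwindow : max a (p.2 + r - h) < min (b - h) (p.2 - r) := by
    apply max_lt <;> apply lt_min <;> linarith
  obtain ⟨t, hΛ, htlt, hlt⟩ := (Measure.dense_of_ae hgrad).exists_between hwindow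
  rw [max_lt_iff] at htlt
  rw [lt_min_iff] at hlt
  have hball : closedBall p r ⊆ univ ×ˢ Ioo a b := by
    rw [← closedBall_prod_same, Real.closedBall_eq_Icc, Real.closedBall_eq_Icc]
    exact prod_mono (subset_univ _) (Icc_subset_Ioo (by linarith) (by linarith))
  calc π * r ^ 2 * gradNorm2 v p ≤ ∫ q in closedBall p r, gradNorm2 v q :=
        area_mul_gradNorm2_le_setIntegral_closedBall (isOpen_univ.prod isOpen_Ioo) hv hharm hr.le
          hball
    _ ≤ ∫ q in Ico 0 T ×ˢ Icc t (t + h), gradNorm2 v q :=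
        setIntegral_closedBall_gradNorm2_le (hv.of_le one_le_two) hper hr (by linarith) htlt.1
          (by linarith) hlt.2.le (by linarith)
    _ ≤ Λ := hΛ ⟨htlt.1, hlt.1⟩

theorem gradNorm2_le_of_setIntegral_window_le (hh : 0 < h) (hab : h < b - a) (hhT : h ≤ T)
    (hv : ContDiffOn ℝ 2 v (univ ×ˢ Ioo a b)) (hharm : ∀ p ∈ univ ×ˢ Ioo a b, lap2 v p = 0)
    (hper : Function.Periodic v (T, 0))
    (hgrad : ∀ᵐ t ∂volume.restrict (Ioo a (b - h)),
      ∫ p in Ico 0 T ×ˢ Icc t (t + h), gradNorm2 v p ≤ Λ)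
    (hp : p.2 ∈ Icc (a + h / 2) (b - h / 2)) :
    gradNorm2 v p ≤ 4 * Λ / (π * h ^ 2) := by
  have hlim : Tendsto (fun r : ℝ => π * r ^ 2 * gradNorm2 v p) (𝓝[<] (h / 2))
      (𝓝 (π * (h / 2) ^ 2 * gradNorm2 v p)) :=
    (Continuous.tendsto (by fun_prop) _).mono_left nhdsWithin_le_nhds
  have hle : π * (h / 2) ^ 2 * gradNorm2 v p ≤ Λ := by
    refine le_of_tendsto hlim ?_
    filter_upwards [Ioo_mem_nhdsLT (half_pos hh)] with r hr
    exact area_mul_gradNorm2_le_of_lt hab hhT hv hharm hper hgrad hp hr.1 hr.2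
  rw [le_div_iff₀ (by positivity)]
  linarith

end GradientEstimate

theorem harmonic_cylinder_estimates_general {a b h T Λ : ℝ} (hh : 0 < h) (hab : h < b - a)
    (hhT : h ≤ T) {v : ℝ × ℝ → ℝ} (hper : Function.Periodic v (T, 0))
    (hv : ContDiffOn ℝ 2 v (univ ×ˢ Ioo a b)) (hharm : ∀ p ∈ univ ×ˢ Ioo a b, lap2 v p = 0)
    (hgrad : ∀ᵐ t ∂volume.restrict (Ioo a (b - h)),
      ∫ p in Ico 0 T ×ˢ Icc t (t + h), gradNorm2 v p ≤ Λ) :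
    ∃ A B : ℝ, |B| ≤ 4 * Λ / (π * h ^ 2) ∧
      (∀ t ∈ Ioo a b, ⨍ θ in 0..T, v (θ, t) = A + B * t) ∧
      ∀ p : ℝ × ℝ, p.2 ∈ Icc (a + h / 2) (b - h / 2) →
        gradNorm2 v p ≤ 4 * Λ / (π * h ^ 2) ∧
          |v p - A - B * p.2| ≤ 4 * Λ / (π * h ^ 2) * (T / 2) := by
  have hT : 0 < T := hh.trans_le hhT
  have hv₁ : ContDiffOn ℝ 1 v (univ ×ˢ Ioo a b) := hv.of_le one_le_two
  have hgradient : ∀ {p : ℝ × ℝ}, p.2 ∈ Icc (a + h / 2) (b - h / 2) →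
      gradNorm2 v p ≤ 4 * Λ / (π * h ^ 2) :=
    gradNorm2_le_of_setIntegral_window_le hh hab hhT hv hharm hper hgrad
  obtain ⟨t₀, ht₀a, ht₀b⟩ : (Icc (a + h / 2) (b - h / 2)).Nonempty :=
    nonempty_Icc.2 (by linarith)
  have ht₀ : t₀ ∈ Ioo a b := ⟨by linarith, by linarith⟩
  set B := ⨍ θ in 0..T, fderiv ℝ v (θ, t₀) (0, 1)
  have haverage : ∀ t ∈ Ioo a b,
      ⨍ θ in 0..T, v (θ, t) = (⨍ θ in 0..T, v (θ, t₀)) - B * t₀ + B * t := fun t ht => by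
    rw [interval_average_slice_fst_eq_add_mul isOpen_Ioo isPreconnected_Ioo hv hharm hper ht₀ ht]
    ring
  refine ⟨_, B, abs_interval_average_fderiv_snd_le isOpen_Ioo hv₁ ht₀ hT.ne'
    fun θ => hgradient ⟨ht₀a, ht₀b⟩, haverage, fun ⟨x, t⟩ hp => ⟨hgradient hp, ?_⟩⟩
  have ht : t ∈ Ioo a b := ⟨by linarith [hp.1], by linarith [hp.2]⟩
  rw [sub_sub, ← haverage t ht]
  exact abs_sub_interval_average_slice_fst_le isOpen_Ioo hv₁ ht hT hper (fun θ => hgradient hp) x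

/-- **Interior estimates for harmonic functions on a flat cylinder.**
Let `v` be a harmonic function on the flat cylinder `S¹ × (a,b)` (`b - a > 1`),
realized as a function `v(θ,t)` on the strip `ℝ × (a,b)` that is `2π`-periodic in `θ`,
with `‖∇v‖_{L¹(S¹×[t,t+1])} ≤ Λ` for a.e. `t ∈ (a, b-1)`.  Then:
(i) `sup_{S¹×[a+1/2,b-1/2]} |∇v| ≤ 4Λ/π`;
(ii) the circle average `(1/2π)∫_{S¹×{t}} v dθ` is an affine function `A + Bt` of `t`
with `|B| ≤ 4Λ/π`; and
(iii) `|v(θ,t) - A - Bt| ≤ 4Λ` on `S¹ × [a+1/2, b-1/2]`. -/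
theorem harmonic_cylinder_estimates
    (a b Λ : ℝ) (hab : 1 < b - a) (hΛ : 0 < Λ)
    (v : ℝ × ℝ → ℝ)
    (hper : ∀ p : ℝ × ℝ, v (p.1 + 2 * π, p.2) = v p)
    (hsm : ContDiffOn ℝ (⊤ : ℕ∞) v (Set.univ ×ˢ Set.Ioo a b))
    (hharm : ∀ p ∈ (Set.univ ×ˢ Set.Ioo a b : Set (ℝ × ℝ)), lap2 v p = 0)
    (hgrad : ∀ᵐ t ∂(volume.restrict (Set.Ioo a (b - 1))),
      (∫ p in (Set.Ico (0 : ℝ) (2 * π)) ×ˢ Set.Icc t (t + 1), gradNorm2 v p) ≤ Λ) :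
    ∃ A B : ℝ, |B| ≤ 4 * Λ / π ∧
      (∀ t ∈ Set.Ioo a b,
        (1 / (2 * π)) * ∫ θ in (0 : ℝ)..(2 * π), v (θ, t) = A + B * t) ∧
      (∀ p : ℝ × ℝ, p.2 ∈ Set.Icc (a + 1 / 2) (b - 1 / 2) →
        gradNorm2 v p ≤ 4 * Λ / π ∧ |v p - A - B * p.2| ≤ 4 * Λ) := by
  have hgeneral := harmonic_cylinder_estimates_general one_pos hab (by linarith [pi_gt_three])
    (fun p => by simpa [Prod.add_def] using hper p) (hsm.of_le (by norm_cast)) hharm hgrad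
  have hK : 4 * Λ / π * (2 * π / 2) = 4 * Λ := by field_simp
  simpa only [interval_average_eq_div, one_pow, mul_one, sub_zero, hK, one_div,
    ← div_eq_inv_mul] using hgeneral
end
end
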